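/- arXiv:2309.09228 — 5 statements merged into one kernel-verified Lean document; each statement's English description precedes it below -/
import Mathlib

section
/- Let G be a finite simple graph that is s-connected (for some integer s ≥ 1) and whose independence number satisfies α(G) < s + 2. Then G has a Hamiltonian path, i.e., a path visiting every vertex of G exactly once. -/
/-!
This is the path version of the Chvátal–Erdős theorem. Take a longest path `l` and suppose a vertex
`h` lies off it. Let `H` be the set of vertices reachable from `h` without meeting `l`, and `N` the
set of vertices of `l` with a neighbour in `H`. The first vertex of `l` is not in `N` (otherwise `l`
could be prolonged), so deleting `N` separates it from `h`, and therefore `s ≤ |N|`. The last vertex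
of `l` is not in `N` either, so every `x ∈ N` has a successor `x⁺` on `l`.

The vertices `x⁺` (`x ∈ N`), the first vertex of `l`, and `h` are pairwise nonadjacent: an edge
between two of them would allow `l` to be rerouted through `H` to a path through all vertices of `l`
and at least one more. These are `|N| + 2 ≥ s + 2` vertices, which contradicts the bound on the
independence number.

Paths are handled as lists of vertices that are chains for adjacency and have no duplicates. A
rerouted path is a rearrangement of `l ++ Q` for a path `Q` inside `H`, so its being duplicate-free
follows from a permutation (`IsLongest.not_chain`).
-/

open SimpleGraph

/-- A graph is `s`-connected if it has at least `s+1` vertices and deleting any set of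
fewer than `s` vertices leaves a connected graph. -/
def SConnected {V : Type*} [Fintype V] (G : SimpleGraph V) (s : ℕ) : Prop :=
  s + 1 ≤ Fintype.card V ∧ ∀ A : Set V, A.ncard < s → (G.induce Aᶜ).Connected

namespace ChvatalErdos

variable {V : Type*}

/-- `l` is the vertex list of a path of `G` of maximum length. -/
structure IsLongest (G : SimpleGraph V) (l : List V) : Prop where
  chain : l.IsChain G.Adj
  nodup : l.Nodup
  max : ∀ l' : List V, l'.IsChain G.Adj → l'.Nodup → l'.length ≤ l.length

/-- `Off G l h z`: the vertex `z` is reachable from `h` by a walk avoiding `l`. For `h ∉ l` these `z`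
form the component of `h` in the graph obtained from `G` by deleting `l`. -/
def Off (G : SimpleGraph V) (l : List V) (h z : V) : Prop :=
  ∃ w : G.Walk h z, ∀ v ∈ w.support, v ∉ l

/-- `l` has an attachment at `x`: `x` has a neighbour in the component `Off G l h`. -/
def Att (G : SimpleGraph V) (l : List V) (h x : V) : Prop :=
  ∃ z, Off G l h z ∧ G.Adj x z

lemma exists_isLongest [Fintype V] (G : SimpleGraph V) : ∃ l, IsLongest G l := by
  classical
  let P : ℕ → Prop := fun n => ∃ l : List V, l.IsChain G.Adj ∧ l.Nodup ∧ l.length = n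
  have hb : ∀ n, P n → n ≤ Fintype.card V := by
    rintro n ⟨l, -, hn, rfl⟩
    exact hn.length_le_card
  have h0 : P 0 := ⟨[], by simp, by simp, rfl⟩
  obtain ⟨l, hc, hn, hl⟩ := Nat.findGreatest_spec (P := P) (Nat.zero_le (Fintype.card V)) h0
  refine ⟨l, hc, hn, fun l' hc' hn' => ?_⟩
  rw [hl]
  exact Nat.le_findGreatest hn'.length_le_card ⟨l', hc', hn', rfl⟩

section

variable {G : SimpleGraph V} {l : List V} {h : V}

lemma IsLongest.not_chain (hl : IsLongest G l) {Q l' : List V} (hQ : Q ≠ []) (hQn : Q.Nodup)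
    (hd : ∀ v ∈ Q, v ∉ l) (hp : l'.Perm (l ++ Q)) : ¬ l'.IsChain G.Adj := by
  intro hc
  have h1 : l'.Nodup := hp.nodup_iff.2
    (List.nodup_append.2 ⟨hl.nodup, hQn, fun a ha b hb hab => hd b hb (hab ▸ ha)⟩)
  have h2 := hl.max l' hc h1
  have h3 := hp.length_eq
  have h4 := List.length_pos_iff.2 hQ
  rw [List.length_append] at h3
  omega

lemma Off.not_mem {z : V} (hz : Off G l h z) : z ∉ l := by
  obtain ⟨w, hw⟩ := hz
  exact hw z w.end_mem_support

lemma Off.step {z y : V} (hz : Off G l h z) (hzy : G.Adj z y) (hy : y ∉ l) : Off G l h y := by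
  obtain ⟨w, hw⟩ := hz
  refine ⟨w.concat hzy, fun v hv => ?_⟩
  rw [SimpleGraph.Walk.support_concat] at hv
  simp only [List.mem_append, List.mem_singleton] at hv
  rcases hv with hv | rfl
  · exact hw v hv
  · exact hy

/-- Two vertices of the component off `l` are joined by a path that avoids `l`. -/
lemma Off.link {z z' : V} (hz : Off G l h z) (hz' : Off G l h z') :
    ∃ Q : List V, Q ≠ [] ∧ Q.Nodup ∧ (∀ v ∈ Q, v ∉ l) ∧ Q.IsChain G.Adj ∧
      Q.head? = some z ∧ Q.getLast? = some z' := by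
  classical
  obtain ⟨w, hw⟩ := hz
  obtain ⟨w', hw'⟩ := hz'
  let p := (w.reverse.append w').bypass
  refine ⟨p.support, p.support_ne_nil, (SimpleGraph.Walk.bypass_isPath _).support_nodup, ?_,
    p.isChain_adj_support, ?_, ?_⟩
  · intro v hv
    have h1 := SimpleGraph.Walk.support_bypass_subset_support _ hv
    rw [SimpleGraph.Walk.mem_support_append_iff, SimpleGraph.Walk.support_reverse,
      List.mem_reverse] at h1
    exact h1.elim (hw v) (hw' v)
  · rw [List.head?_eq_some_head p.support_ne_nil, p.head_support]
  · rw [List.getLast?_eq_some_getLast p.support_ne_nil, p.getLast_support]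

lemma IsLongest.head_not_att (hl : IsLongest G l) {x : V} {B : List V} (e : l = x :: B) :
    ¬ Att G l h x := by
  rintro ⟨z, hz, hxz⟩
  have hc := hl.chain
  refine hl.not_chain (Q := [z]) (l' := z :: l) (by simp) (by simp) (by simpa using hz.not_mem)
    (List.perm_append_singleton z l).symm ?_
  subst e
  exact List.isChain_cons_cons.2 ⟨hxz.symm, hc⟩

lemma IsLongest.last_not_att (hl : IsLongest G l) {x : V} {A : List V} (e : l = A ++ [x]) :
    ¬ Att G l h x := by
  rintro ⟨z, hz, hxz⟩
  have hc := hl.chain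
  refine hl.not_chain (Q := [z]) (l' := l ++ [z]) (by simp) (by simp) (by simpa using hz.not_mem)
    (List.Perm.refl _) ?_
  subst e
  simp [List.isChain_append] at hc ⊢
  grind

/-- Otherwise the edge `xy` of `l` could be replaced by a detour through `Off G l h`. -/
lemma IsLongest.succ_not_att (hl : IsLongest G l) {x y : V} {A B : List V}
    (e : l = A ++ x :: y :: B) (hx : Att G l h x) : ¬ Att G l h y := by
  rintro ⟨z', hz', hyz⟩
  obtain ⟨z, hz, hxz⟩ := hx
  obtain ⟨Q, hQ, hQn, hd, hQc, h1, h2⟩ := hz.link hz'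
  have hc := hl.chain
  refine hl.not_chain (l' := A ++ [x] ++ Q ++ y :: B) hQ hQn hd ?_ ?_
  · subst e
    classical
    rw [List.perm_iff_count]
    intro a
    simp [List.count_cons]
    omega
  · subst e
    simp [List.isChain_append, List.isChain_cons, h1, h2] at hc ⊢
    grind [G.adj_comm]

/-- Otherwise the initial segment of `l` up to `x` could be reversed and prolonged into
`Off G l h`. -/
lemma IsLongest.head_not_adj_succ (hl : IsLongest G l) {a x y : V} {A B C : List V}
    (e : l = A ++ x :: y :: B) (e' : l = a :: C) (hx : Att G l h x) : ¬ G.Adj a y := by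
  intro hay
  obtain ⟨z, hz, hxz⟩ := hx
  have hc := hl.chain
  refine hl.not_chain (Q := [z]) (l' := z :: (A ++ [x]).reverse ++ y :: B)
    (by simp) (by simp) (by simpa using hz.not_mem) ?_ ?_
  · subst e
    classical
    rw [List.perm_iff_count]
    intro a
    simp [List.count_cons]
    omega
  · have ha : (A ++ [x]).head? = some a := by
      cases A <;> simp_all
    have hs : (A ++ [x]).reverse.IsChain G.Adj := by
      rw [List.isChain_reverse]
      have : (A ++ [x]) <+: l := ⟨y :: B, by simp [e]⟩
      have := hc.prefix this
      simpa [flip, G.adj_comm] using this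
    have hB : (y :: B).IsChain G.Adj := hc.suffix ⟨A ++ [x], by simp [e]⟩
    rw [List.cons_append, List.isChain_cons, List.isChain_append]
    refine ⟨?_, hs, hB, ?_⟩
    · simpa using hxz.symm
    · rw [List.getLast?_reverse, ha]
      simpa using hay

/-- Otherwise `l` could be rerouted: from `x` through `Off G l h` to `x'`, backwards along `l` to
`y`, and along the edge `yy'` to the rest of `l`. Here `C` is the segment of `l` from `y` to
`x'`. -/
lemma IsLongest.succ_not_adj_succ (hl : IsLongest G l) {x y x' y' : V} {A B C : List V}
    (e : l = A ++ x :: (C ++ y' :: B)) (hCy : C.head? = some y) (hCx : C.getLast? = some x')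
    (hx : Att G l h x) (hx' : Att G l h x') : ¬ G.Adj y y' := by
  intro hyy
  obtain ⟨z, hz, hxz⟩ := hx
  obtain ⟨z', hz', hxz'⟩ := hx'
  obtain ⟨Q, hQ, hQn, hd, hQc, h1, h2⟩ := hz.link hz'
  have hc := hl.chain
  refine hl.not_chain (l' := (A ++ [x]) ++ (Q ++ (C.reverse ++ y' :: B))) hQ hQn hd ?_ ?_
  · subst e
    classical
    rw [List.perm_iff_count]
    intro a
    simp [List.count_cons]
    omega
  · have hA : (A ++ [x]).IsChain G.Adj := hc.prefix ⟨C ++ y' :: B, by simp [e]⟩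
    have hB : (y' :: B).IsChain G.Adj := hc.suffix ⟨A ++ x :: C, by simp [e]⟩
    have hC : C.reverse.IsChain G.Adj := by
      rw [List.isChain_reverse]
      have : C <:+: l := ⟨A ++ [x], y' :: B, by simp [e]⟩
      have := hc.infix this
      simpa [flip, G.adj_comm] using this
    refine List.isChain_append.2
      ⟨hA, List.isChain_append.2 ⟨hQc, List.isChain_append.2 ⟨hC, hB, ?_⟩, ?_⟩, ?_⟩
    · simpa [hCy] using hyy
    · simpa [h2, hCx] using hxz'.symm
    · simpa [h1] using hxz

/-- Deleting the attachments separates `h` from the first vertex of `l`. -/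
lemma IsLongest.not_connected (hl : IsLongest G l) (hh : h ∉ l) {a : V} {C : List V}
    (e : l = a :: C) : ¬ (G.induce {x | x ∈ l ∧ Att G l h x}ᶜ).Connected := by
  intro hcon
  have ha : a ∈ ({x | x ∈ l ∧ Att G l h x}ᶜ : Set V) := fun h' => hl.head_not_att e h'.2
  have hh' : h ∈ ({x | x ∈ l ∧ Att G l h x}ᶜ : Set V) := fun h' => hh h'.1
  have key : ∀ u v : ({x | x ∈ l ∧ Att G l h x}ᶜ : Set V),
      (G.induce {x | x ∈ l ∧ Att G l h x}ᶜ).Walk u v → Off G l h u → Off G l h v := by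
    intro u v w
    induction w with
    | nil => exact id
    | @cons u v _ huv _ ih =>
      intro hu
      have huv' : G.Adj u v := huv
      exact ih (hu.step huv' fun hv => v.2 ⟨hv, u, hu, huv'.symm⟩)
  obtain ⟨w⟩ := hcon.preconnected ⟨h, hh'⟩ ⟨a, ha⟩
  have h0 : Off G l h h := ⟨SimpleGraph.Walk.nil, by simpa using hh⟩
  exact (key _ _ w h0).not_mem (by simp [e])

lemma IsLongest.exists_succ (hl : IsLongest G l) {x : V} (hx : x ∈ l) (hax : Att G l h x) :
    ∃ (y : V) (A B : List V), l = A ++ x :: y :: B := by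
  obtain ⟨A, B, e⟩ := List.append_of_mem hx
  cases B with
  | nil => exact absurd hax (hl.last_not_att e)
  | cons y B => exact ⟨y, A, B, e⟩

/-- In a duplicate-free list a vertex has at most one predecessor. -/
lemma pred_unique {x x' y : V} {A B A' B' : List V} (hn : l.Nodup)
    (e : l = A ++ x :: y :: B) (e' : l = A' ++ x' :: y :: B') : x = x' := by
  have h1 : A.length + 1 = A'.length + 1 := by
    have hy : l[A.length + 1]? = some y := by simp [e]
    have hy' : l[A'.length + 1]? = some y := by simp [e']
    have hlt : A.length + 1 < l.length := by simp [e]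
    exact (List.getElem?_inj hlt hn).1 (hy.trans hy'.symm)
  have hx : l[A.length]? = some x := by simp [e]
  have hx' : l[A'.length]? = some x' := by simp [e']
  have h2 : A.length = A'.length := by omega
  rw [h2, hx'] at hx
  exact (Option.some.inj hx).symm

lemma IsLongest.succ_not_adj (hl : IsLongest G l) {x y x' y' : V} {A B A' B' : List V}
    (e : l = A ++ x :: y :: B) (e' : l = A' ++ x' :: y' :: B')
    (hx : Att G l h x) (hx' : Att G l h x') : ¬ G.Adj y y' := by
  have aux : ∀ {x y x' y' : V} {A B A' B' : List V}, l = A ++ x :: y :: B →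
      l = A' ++ x' :: y' :: B' → Att G l h x → Att G l h x' → A.length < A'.length →
      ¬ G.Adj y y' := by
    intro x y x' y' A B A' B' e e' hx hx' hlt
    -- the segment from `y` to `x'` is what is left of `A' ++ [x']` after removing `A ++ [x]`
    have hp : (A ++ [x]) <+: A' :=
      List.prefix_of_prefix_length_le (l₃ := l) ⟨y :: B, by simp [e]⟩ ⟨x' :: y' :: B', e'.symm⟩
        (by simpa using hlt)
    obtain ⟨D, rfl⟩ := hp
    have e2 : l = A ++ x :: ((D ++ [x']) ++ y' :: B') := by simp [e']
    refine hl.succ_not_adj_succ e2 ?_ (by simp) hx hx'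
    have e3 := e.symm.trans e2
    simp only [List.append_cancel_left_eq, List.cons.injEq, true_and] at e3
    cases D <;> simp_all
  intro hyy
  rcases lt_trichotomy A.length A'.length with hlt | heq | hlt
  · exact aux e e' hx hx' hlt hyy
  · have h1 := (List.append_inj (e.symm.trans e') heq).2
    simp only [List.cons.injEq] at h1
    exact hyy.ne h1.2.1
  · exact aux e' e hx' hx hlt hyy.symm

/-- The first vertex of `l`, the vertex `h`, and the successors on `l` of the attachments form an
independent set with two more vertices than there are attachments. -/
lemma IsLongest.exists_indep (hl : IsLongest G l) (hh : h ∉ l) {a : V} {C : List V}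
    (e : l = a :: C) (N : Finset V) (hN : ∀ x, x ∈ N ↔ x ∈ l ∧ Att G l h x) :
    ∃ S : Finset V, (S : Set V).Pairwise (fun a b => ¬ G.Adj a b) ∧ S.card = N.card + 2 := by
  classical
  have hex : ∀ x : V, ∃ y : V, x ∈ N → ∃ A B : List V, l = A ++ x :: y :: B := by
    intro x
    by_cases hx : x ∈ N
    · obtain ⟨y, hy⟩ := hl.exists_succ ((hN x).1 hx).1 ((hN x).1 hx).2
      exact ⟨y, fun _ => hy⟩
    · exact ⟨x, fun h' => absurd h' hx⟩
  choose f hf using hex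
  have h0 : Off G l h h := ⟨SimpleGraph.Walk.nil, by simpa using hh⟩
  have hah : ¬ G.Adj a h := fun h' => hl.head_not_att e ⟨h, h0, h'⟩
  have hne : a ≠ h := by
    rintro rfl
    exact hh (by simp [e])
  have hfh : ∀ x ∈ N, ¬ G.Adj (f x) h := by
    intro x hx h'
    obtain ⟨A, B, e1⟩ := hf x hx
    exact hl.succ_not_att e1 ((hN x).1 hx).2 ⟨h, h0, h'⟩
  have hfa : ∀ x ∈ N, ¬ G.Adj a (f x) := by
    intro x hx
    obtain ⟨A, B, e1⟩ := hf x hx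
    exact hl.head_not_adj_succ e1 e ((hN x).1 hx).2
  have hff : ∀ x ∈ N, ∀ x' ∈ N, ¬ G.Adj (f x) (f x') := by
    intro x hx x' hx'
    obtain ⟨A, B, e1⟩ := hf x hx
    obtain ⟨A', B', e2⟩ := hf x' hx'
    exact hl.succ_not_adj e1 e2 ((hN x).1 hx).2 ((hN x').1 hx').2
  have hinj : Set.InjOn f N := by
    intro x hx x' hx' hxx
    obtain ⟨A, B, e1⟩ := hf x hx
    obtain ⟨A', B', e2⟩ := hf x' hx'
    rw [← hxx] at e2
    exact pred_unique hl.nodup e1 e2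
  have hfneh : h ∉ N.image f := by
    rw [Finset.mem_image]
    rintro ⟨x, hx, rfl⟩
    obtain ⟨A, B, e1⟩ := hf x hx
    exact hh (by rw [e1]; simp)
  have hfnea : a ∉ N.image f := by
    rw [Finset.mem_image]
    rintro ⟨x, hx, rfl⟩
    obtain ⟨A, B, e1⟩ := hf x hx
    have hn := hl.nodup
    have e2 := e.symm.trans e1
    rw [e] at hn
    cases A <;> simp_all
  refine ⟨insert a (insert h (N.image f)), ?_, ?_⟩
  · intro u hu v hv _ huv
    simp only [Finset.coe_insert, Finset.coe_image, Set.mem_insert_iff, Set.mem_image,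
      Finset.mem_coe] at hu hv
    rcases hu with rfl | rfl | ⟨x, hx, rfl⟩ <;> rcases hv with rfl | rfl | ⟨x', hx', rfl⟩
    · exact G.irrefl huv
    · exact hah huv
    · exact hfa _ hx' huv
    · exact hah huv.symm
    · exact G.irrefl huv
    · exact hfh _ hx' huv.symm
    · exact hfa _ hx huv.symm
    · exact hfh _ hx huv
    · exact hff _ hx _ hx' huv
  · rw [Finset.card_insert_of_notMem (by simp only [Finset.mem_insert, not_or]; exact ⟨hne, hfnea⟩),
      Finset.card_insert_of_notMem hfneh, Finset.card_image_of_injOn hinj]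

/-- A nonempty chain for adjacency is the support of a walk. -/
lemma exists_walk (a : V) (C : List V) (hc : (a :: C).IsChain G.Adj) :
    ∃ (v : V) (p : G.Walk a v), p.support = a :: C := by
  induction C generalizing a with
  | nil => exact ⟨a, SimpleGraph.Walk.nil, rfl⟩
  | cons b C ih =>
    rw [List.isChain_cons_cons] at hc
    obtain ⟨v, p, hp⟩ := ih b hc.2
    exact ⟨v, SimpleGraph.Walk.cons hc.1 p, by simp [hp]⟩

end

end ChvatalErdos

open ChvatalErdos in
/-- If `G` is `s`-connected (`s ≥ 1`) and its independence number satisfies `α(G) < s + 2`,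
then `G` has a Hamiltonian path. -/
theorem statement0 {V : Type*} [Fintype V] [DecidableEq V] (G : SimpleGraph V) (s : ℕ)
    (hs : 1 ≤ s) (hconn : SConnected G s)
    (hα : ∀ S : Finset V, ((S : Set V)).Pairwise (fun a b => ¬ G.Adj a b) → S.card < s + 2) :
    ∃ (u v : V) (p : G.Walk u v), p.IsHamiltonian := by
  classical
  obtain ⟨l, hl⟩ := exists_isLongest G
  obtain ⟨a, C, e⟩ : ∃ a C, l = a :: C := by
    have hpos : 0 < Fintype.card V := by have := hconn.1; omega
    obtain ⟨v⟩ := Fintype.card_pos_iff.1 hpos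
    have hlen := hl.max [v] (by simp) (by simp)
    cases l with
    | nil => simp at hlen
    | cons a C => exact ⟨a, C, rfl⟩
  have hall : ∀ h, h ∈ l := by
    by_contra! hcon
    obtain ⟨h, hh⟩ := hcon
    let N : Finset V := Finset.univ.filter fun x => x ∈ l ∧ Att G l h x
    obtain ⟨S, hS, hcard⟩ := hl.exists_indep hh e N (by simp [N])
    have h1 := hα S hS
    refine hl.not_connected hh e (hconn.2 _ ?_)
    have hNs : ({x | x ∈ l ∧ Att G l h x} : Set V) = (N : Set V) := by
      ext x
      simp [N]
    rw [hNs, Set.ncard_coe_finset]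
    omega
  obtain ⟨v, p, hp⟩ := exists_walk a C (e ▸ hl.chain)
  refine ⟨a, v, p, fun x => ?_⟩
  rw [hp, ← e]
  exact List.count_eq_one_of_mem hl.nodup (hall x)
end

section
/- Let G be a finite simple graph with at least 3 vertices that is s-connected (for some integer s ≥ 1) and whose independence number satisfies α(G) < s + 1. Then G has a Hamiltonian cycle, i.e., a cycle visiting every vertex of G exactly once. -/
/-!
The proof is the longest-cycle argument of Chvátal and Erdős. Let `C` be a longest cycle of `G`
(a single edge traversed back and forth also counts as a cycle here, so that one exists as soon as
`G` has an edge) and suppose that it misses a vertex `h`. Let `H` be the component of `h` in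
`G - C` and `X` the set of vertices of `C` with a neighbour in `H`. Two facts follow from
maximality, since a path through `H` can be spliced into `C`:

* two cyclically consecutive vertices of `C` never both lie in `X` (`IsCyc.splice`);
* the successors on `C` of two distinct vertices of `X` are never adjacent (`IsCyc.splice_cross`).

By the first fact some vertex of `C` lies outside `X`, so deleting `X` separates it from `h`, and
`s`-connectedness gives `s ≤ |X|`. By both facts the successors of the vertices of `X` together with
`h` form an independent set of size `|X| + 1 ≥ s + 1`, a contradiction. Hence `C` visits all
vertices, and as there are at least three of them it is a genuine Hamiltonian cycle
(`IsCyc.exists_isHamiltonianCycle`).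
-/

open SimpleGraph

/-- The list `l` enumerates, without repetition, the vertices of a cycle of `G` in cyclic order.
The empty list and the list of the two ends of an edge are allowed; a one-element list is not,
since `G` has no loops. -/
def IsCyc {V : Type*} (G : SimpleGraph V) (l : List V) : Prop :=
  l.Nodup ∧ l.IsChain G.Adj ∧ ∀ x ∈ l.getLast?, ∀ y ∈ l.head?, G.Adj x y

lemma IsCyc.append_comm {V : Type*} {G : SimpleGraph V} {a b : List V}
    (h : IsCyc G (a ++ b)) : IsCyc G (b ++ a) := by
  obtain ⟨h1, h2, h3⟩ := h
  rcases a.eq_nil_or_concat with rfl | ⟨a, x, rfl⟩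
  · simpa [IsCyc] using And.intro h1 (And.intro h2 h3)
  rcases b.eq_nil_or_concat with rfl | ⟨b, y, rfl⟩
  · simpa [IsCyc] using And.intro h1 (And.intro h2 h3)
  simp only [List.concat_eq_append] at *
  rw [List.isChain_append] at h2
  refine ⟨List.nodup_append_comm.1 h1, List.isChain_append.2 ⟨h2.2.1, h2.1, ?_⟩, ?_⟩
  · simpa [List.getLast?_append, List.head?_append, List.getLast?_cons] using h3
  · simpa [List.getLast?_append, List.head?_append, List.getLast?_cons] using h2.2.2

lemma IsCyc.isRotated {V : Type*} {G : SimpleGraph V} {l l' : List V}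
    (h : IsCyc G l) (hr : l ~r l') : IsCyc G l' := by
  obtain ⟨n, hn, rfl⟩ := List.isRotated_iff_mod.1 hr
  rw [List.rotate_eq_drop_append_take hn]
  exact IsCyc.append_comm (by rwa [List.take_append_drop])

lemma IsCyc.exists_isHamiltonianCycle {V : Type*} [Fintype V] [DecidableEq V]
    {G : SimpleGraph V} {l : List V} (h : IsCyc G l) (hl : ∀ v, v ∈ l)
    (hn : 3 ≤ Fintype.card V) : ∃ (u : V) (p : G.Walk u u), p.IsHamiltonianCycle := by
  obtain ⟨h1, h2, h3⟩ := h
  have hlen : 3 ≤ l.length := by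
    have : Fintype.card V ≤ l.length := by
      rw [← Finset.card_univ, ← List.toFinset_card_of_nodup h1]
      exact Finset.card_le_card fun v _ => by simp [hl]
    omega
  match l, h1, h2, h3, hlen, hl with
  | a :: b :: t, h1, h2, h3, hlen, hl =>
    let q := Walk.ofSupport (b :: t) (by simp) h2.of_cons
    have hq : q.support = b :: t := Walk.support_ofSupport _ _
    have hab : G.Adj a ((b :: t).head (by simp)) := h2.rel
    have hla : G.Adj ((b :: t).getLast (by simp)) a :=
      h3 _ (by simp [List.getLast?_eq_some_getLast]) _ (by simp)
    have hqp : q.IsPath := by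
      rw [Walk.isPath_def, hq]; exact (List.nodup_cons.1 h1).2
    have haq : a ∉ q.support := by rw [hq]; exact (List.nodup_cons.1 h1).1
    have hp : (Walk.cons hab q).IsPath := by
      rw [Walk.cons_isPath_iff]; exact ⟨hqp, haq⟩
    refine ⟨_, Walk.cons hla (Walk.cons hab q), ?_⟩
    rw [Walk.isHamiltonianCycle_isCycle_and_isHamiltonian_tail]
    constructor
    · rw [Walk.cons_isCycle_iff]
      refine ⟨hp, ?_⟩
      rw [Walk.edges_cons, List.mem_cons, not_or]
      constructor
      · intro he
        -- the closing edge could equal the first one only if the cycle had length two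
        have hbe : (b :: t).getLast (by simp) = b := by
          rcases Sym2.eq_iff.1 he with ⟨h, -⟩ | ⟨h, -⟩
          · exact absurd h hla.ne
          · exact h
        have ht : t ≠ [] := by rintro rfl; simp at hlen
        rw [List.getLast_cons ht] at hbe
        have := (List.nodup_cons.1 (List.nodup_cons.1 h1).2).1
        exact this (hbe ▸ List.getLast_mem ht)
      · intro he
        exact haq (Walk.snd_mem_support_of_mem_edges _ he)
    · have : (Walk.cons hab q).IsHamiltonian := by
        apply hp.isHamiltonian_of_mem
        intro w
        rw [Walk.support_cons, hq]
        exact hl w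
      simpa [Walk.IsHamiltonian] using this

/-- If consecutive vertices `x`, `z` of a cycle are joined by a path outside the cycle, that path
replaces the edge `xz`. -/
lemma IsCyc.splice {V : Type*} {G : SimpleGraph V} {x z u v : V} {t P : List V}
    (h : IsCyc G (x :: z :: t)) (hP : P.IsChain G.Adj) (hPn : P.Nodup)
    (hd : ∀ w ∈ P, w ∉ x :: z :: t) (hu : P.head? = some u) (hv : P.getLast? = some v)
    (hxu : G.Adj x u) (hvz : G.Adj v z) : IsCyc G (x :: (P ++ z :: t)) := by
  obtain ⟨h1, h2, h3⟩ := h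
  refine ⟨?_, ?_, ?_⟩
  · simp only [List.nodup_cons, List.nodup_append, List.mem_cons, List.mem_append] at *
    grind
  · rw [List.isChain_cons, List.isChain_append]
    refine ⟨?_, hP, h2.of_cons, ?_⟩
    · simp [List.head?_append, hu, hxu]
    · simp [hv, hvz]
  · simpa [List.getLast?_cons, List.getLast?_append] using h3

/-- A cycle made of two arcs, the first from `x'` to `y` and the second from `y'` to `x`, is
re-routed along a path outside it from `y` to `x` and along the edge `x'y'`; the second arc is then
traversed backwards. -/
lemma IsCyc.splice_cross {V : Type*} {G : SimpleGraph V} {x y x' y' u v : V} {A B P : List V}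
    (h : IsCyc G (A ++ B)) (hA : A.head? = some x') (hA' : A.getLast? = some y)
    (hB : B.head? = some y') (hB' : B.getLast? = some x)
    (hP : P.IsChain G.Adj) (hPn : P.Nodup)
    (hd : ∀ w ∈ P, w ∉ A ++ B) (hu : P.head? = some u) (hv : P.getLast? = some v)
    (hyu : G.Adj y u) (hvx : G.Adj v x) (hxy : G.Adj x' y') : IsCyc G (A ++ (P ++ B.reverse)) := by
  obtain ⟨h1, h2, h3⟩ := h
  refine ⟨?_, ?_, ?_⟩
  · simp only [List.nodup_append, List.mem_append, List.nodup_reverse, List.mem_reverse] at *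
    grind
  · rw [List.isChain_append] at h2
    rw [List.isChain_append, List.isChain_append, List.isChain_reverse]
    refine ⟨h2.1, ⟨hP, ?_, ?_⟩, ?_⟩
    · exact h2.2.1.imp fun a b hab => hab.symm
    · simp [hv, hB', hvx]
    · simp [hA', hu, hyu, List.head?_append]
  · simp [List.getLast?_append, List.head?_append, hA, hB, hxy.symm]

lemma next_of_isRotated {V : Type*} [DecidableEq V] {l t : List V} {x z : V} (hl : l.Nodup)
    (hr : l ~r x :: z :: t) (hx : x ∈ l) : l.next x hx = z := by
  rw [List.isRotated_next_eq hr hl hx]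
  exact List.next_cons_cons_eq _ _ _ _

/-- The component, in the graph left after deleting the vertices of `l`, of the vertex `h`. -/
def compOff {V : Type*} (G : SimpleGraph V) (l : List V) (h : V) : Set V :=
  {v | ∃ (hh : h ∉ l) (hv : v ∉ l),
    (G.induce {w | w ∉ l}).Reachable ⟨h, hh⟩ ⟨v, hv⟩}

lemma compOff_adj {V : Type*} {G : SimpleGraph V} {l : List V} {h u v : V}
    (hu : u ∈ compOff G l h) (huv : G.Adj u v) (hv : v ∉ l) : v ∈ compOff G l h := by
  obtain ⟨hh, hul, hr⟩ := hu
  refine ⟨hh, hv, hr.trans (Adj.reachable ?_)⟩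
  exact huv

lemma compOff_path {V : Type*} [DecidableEq V] {G : SimpleGraph V} {l : List V} {h u v : V}
    (hu : u ∈ compOff G l h) (hv : v ∈ compOff G l h) :
    ∃ P : List V, P.IsChain G.Adj ∧ P.Nodup ∧ (∀ w ∈ P, w ∉ l) ∧
      P.head? = some u ∧ P.getLast? = some v := by
  obtain ⟨hh, hul, hru⟩ := hu
  obtain ⟨_, hvl, hrv⟩ := hv
  obtain ⟨p, hp⟩ := (hru.symm.trans hrv).exists_isPath
  let q := p.map (Embedding.induce {w | w ∉ l}).toHom
  have hq : q.IsPath := hp.map (Embedding.induce (G := G) {w | w ∉ l}).injective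
  refine ⟨q.support, q.isChain_adj_support, hq.support_nodup, ?_, ?_, ?_⟩
  · intro w hw
    rw [Walk.support_map, List.mem_map] at hw
    obtain ⟨a, -, rfl⟩ := hw
    exact a.2
  · rw [List.head?_eq_some_head q.support_ne_nil, Walk.head_support]; rfl
  · rw [List.getLast?_eq_some_getLast q.support_ne_nil, Walk.getLast_support]; rfl

/-- A nonempty cycle that misses a vertex can be lengthened when `G` is `s`-connected and has no
`s + 1` independent vertices. -/
lemma IsCyc.exists_longer {V : Type*} [Fintype V] [DecidableEq V] {G : SimpleGraph V} {s : ℕ}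
    (hconn : SConnected G s)
    (hα : ∀ S : Finset V, ((S : Set V)).Pairwise (fun a b => ¬ G.Adj a b) → S.card < s + 1)
    {l : List V} (hc : IsCyc G l) (hne : l ≠ []) {h : V} (hh : h ∉ l) :
    ∃ l', IsCyc G l' ∧ l.length < l'.length := by
  classical
  by_contra! hmax
  have hnd := hc.1
  have hhH : h ∈ compOff G l h := ⟨hh, hh, Reachable.refl _⟩
  let X : Finset V := l.toFinset.filter fun x => ∃ u ∈ compOff G l h, G.Adj x u
  have hX : ∀ {x}, x ∈ X ↔ x ∈ l ∧ ∃ u ∈ compOff G l h, G.Adj x u := by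
    intro x; simp [X]
  have hrot : ∀ x ∈ l, ∃ z t, l ~r x :: z :: t := by
    intro x hx
    obtain ⟨P, Q, rfl⟩ := List.append_of_mem hx
    have hr : P ++ x :: Q ~r x :: (Q ++ P) := by
      simpa using List.isRotated_append (l := P) (l' := x :: Q)
    rcases hQP : Q ++ P with _ | ⟨z, t⟩
    · rw [hQP] at hr
      have := (hc.isRotated hr).2.2 x (by simp) x (by simp)
      exact absurd this (G.irrefl)
    · exact ⟨z, t, hQP ▸ hr⟩
  have hcons : ∀ x ∈ X, ∀ hx : x ∈ l, l.next x hx ∉ X := by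
    intro x hxX hx hzX
    obtain ⟨z, t, hr⟩ := hrot x hx
    rw [next_of_isRotated hnd hr hx] at hzX
    obtain ⟨-, u, hu, hxu⟩ := hX.1 hxX
    obtain ⟨-, v, hv, hzv⟩ := hX.1 hzX
    obtain ⟨P, hP, hPn, hPd, hPu, hPv⟩ := compOff_path hu hv
    have := hmax _ ((hc.isRotated hr).splice hP hPn
      (fun w hw hw' => hPd w hw (hr.mem_iff.2 hw')) hPu hPv hxu hzv.symm)
    rw [hr.perm.length_eq] at this
    have hPne : P ≠ [] := by rintro rfl; simp at hPu
    have := List.length_pos_iff.2 hPne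
    simp only [List.length_append, List.length_cons] at *
    omega
  have hcross : ∀ x ∈ X, ∀ y ∈ X, x ≠ y → ∀ (hx : x ∈ l) (hy : y ∈ l),
      ¬ G.Adj (l.next x hx) (l.next y hy) := by
    intro x hxX y hyX hxy hx hy hadj
    obtain ⟨z, t, hr⟩ := hrot x hx
    have hyt : y ∈ z :: t := by
      have := hr.mem_iff.1 hy
      exact (List.mem_cons.1 this).resolve_left hxy.symm
    obtain ⟨A, B, hAB⟩ := List.append_of_mem hyt
    -- the arcs run from the successor of `x` to `y` and from the successor of `y` to `x`
    have hr1 : l ~r (A ++ [y]) ++ (B ++ [x]) := by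
      rw [hAB] at hr
      refine hr.trans ?_
      simpa using List.isRotated_append (l := [x]) (l' := A ++ y :: B)
    have hr2 : l ~r y :: (B ++ x :: A) := by
      refine hr1.trans ?_
      simpa using List.isRotated_append (l := A) (l' := y :: (B ++ [x]))
    have hA : (A ++ [y]).head? = some (l.next x hx) := by
      rw [next_of_isRotated hnd hr hx]
      have := congrArg List.head? hAB
      rw [List.head?_cons] at this
      rw [this]
      cases A <;> simp
    have hB : (B ++ [x]).head? = some (l.next y hy) := by
      rcases B with _ | ⟨b, B⟩
      · rw [next_of_isRotated hnd hr2 hy]; rfl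
      · rw [next_of_isRotated hnd hr2 hy]; rfl
    obtain ⟨-, v, hv, hxv⟩ := hX.1 hxX
    obtain ⟨-, u, hu, hyu⟩ := hX.1 hyX
    obtain ⟨P, hP, hPn, hPd, hPu, hPv⟩ := compOff_path hu hv
    have := hmax _ ((hc.isRotated hr1).splice_cross hA (by simp) hB (by simp) hP hPn
      (fun w hw hw' => hPd w hw (hr1.mem_iff.2 hw')) hPu hPv hyu hxv.symm hadj)
    rw [hr1.perm.length_eq] at this
    have hPne : P ≠ [] := by rintro rfl; simp at hPu
    have := List.length_pos_iff.2 hPne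
    simp only [List.length_append, List.length_cons, List.length_reverse, List.length_nil] at *
    omega
  obtain ⟨c, hcl, hcX⟩ : ∃ c ∈ l, c ∉ X := by
    obtain ⟨x, hx⟩ := List.exists_mem_of_ne_nil l hne
    by_cases hxX : x ∈ X
    · exact ⟨_, List.next_mem l x hx, hcons x hxX hx⟩
    · exact ⟨x, hx, hxX⟩
  have hsX : s ≤ X.card := by
    by_contra! hlt
    have hcon := hconn.2 (X : Set V) (by rwa [Set.ncard_coe_finset])
    have hhX : h ∉ X := fun hx => hh (hX.1 hx).1
    -- a walk from `h` avoiding `X` never leaves the component of `h`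
    have key : ∀ a b : ((X : Set V)ᶜ : Set V), (G.induce (X : Set V)ᶜ).Walk a b →
        a.1 ∈ compOff G l h → b.1 ∈ compOff G l h := by
      intro a b p
      induction p with
      | nil => exact id
      | @cons a b c hab p ih =>
        intro ha
        have hab' : G.Adj a.1 b.1 := hab
        refine ih (compOff_adj ha hab' fun hbl => ?_)
        exact b.2 (Finset.mem_coe.2 (hX.2 ⟨hbl, _, ha, hab'.symm⟩))
    obtain ⟨p⟩ := hcon.preconnected ⟨h, by simpa using hhX⟩ ⟨c, by simpa using hcX⟩
    obtain ⟨_, hcl', -⟩ := key _ _ p hhH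
    exact hcl' hcl
  have hXl : ∀ x : X, x.1 ∈ l := fun x => (hX.1 x.2).1
  let Y : Finset V := X.attach.image fun x => l.next x.1 (hXl x)
  have hYcard : Y.card = X.card := by
    rw [Finset.card_image_of_injective, Finset.card_attach]
    intro x y hxy
    have h1 := List.prev_next l hnd x.1 (hXl x)
    have h2 := List.prev_next l hnd y.1 (hXl y)
    apply Subtype.ext
    rw [← h1, ← h2]
    congr 1
  have hY : ∀ {y}, y ∈ Y → ∃ x ∈ X, ∃ hx : x ∈ l, y = l.next x hx := by
    intro y hy
    obtain ⟨x, -, rfl⟩ := Finset.mem_image.1 hy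
    exact ⟨x.1, x.2, hXl x, rfl⟩
  have hhY : h ∉ Y := by
    intro hy
    obtain ⟨x, -, hx, rfl⟩ := hY hy
    exact hh (List.next_mem _ _ _)
  have hhadj : ∀ y ∈ Y, ¬ G.Adj y h := by
    intro y hy hyh
    obtain ⟨x, hxX, hx, rfl⟩ := hY hy
    exact hcons x hxX hx (hX.2 ⟨List.next_mem _ _ _, h, hhH, hyh⟩)
  have := hα (insert h Y) (by
    rw [Finset.coe_insert, Set.pairwise_insert]
    refine ⟨?_, fun y hy _ => ⟨fun hadj => hhadj y hy hadj.symm, hhadj y hy⟩⟩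
    intro a ha b hb hab
    obtain ⟨x, hxX, hx, rfl⟩ := hY ha
    obtain ⟨y, hyX, hy, rfl⟩ := hY hb
    refine hcross x hxX y hyX ?_ hx hy
    rintro rfl
    exact hab rfl)
  rw [Finset.card_insert_of_notMem hhY] at this
  omega

/-- If `G` has at least 3 vertices, is `s`-connected (`s ≥ 1`), and its independence number
satisfies `α(G) < s + 1`, then `G` has a Hamiltonian cycle. -/
theorem statement1 {V : Type*} [Fintype V] [DecidableEq V] (G : SimpleGraph V) (s : ℕ)
    (hs : 1 ≤ s) (hn : 3 ≤ Fintype.card V) (hconn : SConnected G s)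
    (hα : ∀ S : Finset V, ((S : Set V)).Pairwise (fun a b => ¬ G.Adj a b) → S.card < s + 1) :
    ∃ (u : V) (p : G.Walk u u), p.IsHamiltonianCycle := by
  classical
  have hedge : ∃ a b, G.Adj a b := by
    obtain ⟨v, w, hvw⟩ := Fintype.exists_pair_of_one_lt_card (α := V) (by omega)
    have h0 := hconn.2 ∅ (by simp; omega)
    obtain ⟨p⟩ := h0.preconnected ⟨v, by simp⟩ ⟨w, by simp⟩
    cases p with
    | nil => exact absurd rfl hvw
    | cons hab _ => exact ⟨_, _, hab⟩
  obtain ⟨a, b, hab⟩ := hedge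
  have hcyc : IsCyc G [a, b] := by
    refine ⟨by simp [hab.ne], by simp [hab], by simp [hab.symm]⟩
  let p : ℕ → Prop := fun n => ∃ l : List V, IsCyc G l ∧ l.length = n
  have hp2 : p 2 := ⟨_, hcyc, rfl⟩
  have hb : ∀ {l : List V}, IsCyc G l → l.length ≤ Fintype.card V :=
    fun hl => hl.1.length_le_card
  have h2 : 2 ≤ Fintype.card V := by omega
  obtain ⟨l, hl, hlen⟩ : p (Nat.findGreatest p (Fintype.card V)) :=
    Nat.findGreatest_spec h2 hp2
  have hlen2 : 2 ≤ l.length := hlen ▸ Nat.le_findGreatest h2 hp2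
  refine hl.exists_isHamiltonianCycle (fun v => ?_) hn
  by_contra hv
  obtain ⟨l', hl', hlt⟩ := hl.exists_longer hconn hα (by rintro rfl; simp at hlen2) hv
  have := Nat.le_findGreatest (hb hl') (show p l'.length from ⟨l', hl', rfl⟩)
  omega
end

section
/- Let G be an s-connected finite simple graph with s ≥ 1, let x be a vertex of G, and let Y be a nonempty set of vertices of G with x ∉ Y. Set m = min{s, |Y|}. Then there exist m distinct vertices y₁, …, y_m ∈ Y and m paths P₁, …, P_m in G such that for each i the path P_i starts at x and ends at y_i, the only vertex of P_i belonging to Y is y_i, and any two of the paths P₁, …, P_m share no vertex other than x. -/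
/-!
The theorem is the fan version of Menger's theorem. The set version of Menger's theorem
(`menger`) says: if every set separating `A` from `B` has at least `k` vertices, then there are
`k` pairwise disjoint `A`–`B` paths. It is applied in the graph `G - x` with `A = N(x)`, `B = Y`:
a set `S` with fewer than `min s |Y|` vertices misses some `y ∈ Y`, and since deleting `S \ {x}`
leaves `G` connected, some path from `x` to `y` avoids `S \ {x}`; its part after `x` shows that
`S` does not separate. The resulting disjoint paths are cut at their first vertex in `Y` and
prolonged by `x`.

Menger's theorem is proved by Göring's induction, deleting an edge `e = xy` of `G` to get `H`. If
no set with fewer than `k` vertices separates in `H`, the induction hypothesis suffices. Otherwise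
let `S` be such a separator in `H`. As `S` does not separate in `G`, one end of `e`, say `x`, is
reachable from `A` in `H - S`, and the other end `y` is reachable from `B`. Every `A`–`(S ∪ {x})`
separator in `H` separates `A` from `B` in `G` (`Separates.of_insert`), and likewise for `S ∪ {y}`
and `B`, so by induction there are `k` disjoint `A`–`(S ∪ {x})` paths and `k` disjoint
`(S ∪ {y})`–`B` paths in `H`. They can meet only in `S` (`meet_mem`), so they can be glued along
`S` and `e`.
-/

open SimpleGraph

/-! ### Separators and linkages -/

/-- `S` separates `A` from `B`: every walk from `A` to `B` has a vertex in `S`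
(which may contain vertices of `A` and `B`). -/
def Separates {V : Type*} (G : SimpleGraph V) (A B S : Finset V) : Prop :=
  ∀ a ∈ A, ∀ b ∈ B, ∀ w : G.Walk a b, ∃ v ∈ w.support, v ∈ S

/-- There are `k` pairwise disjoint paths from `A` to `B`. Inner vertices of the paths are
allowed to lie in `A` or `B`. -/
def Linked {V : Type*} (G : SimpleGraph V) (A B : Finset V) (k : ℕ) : Prop :=
  ∃ (a b : Fin k → V) (P : ∀ i, G.Walk (a i) (b i)),
    (∀ i, a i ∈ A) ∧ (∀ i, b i ∈ B) ∧ (∀ i, (P i).IsPath) ∧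
    ∀ i j v, v ∈ (P i).support → v ∈ (P j).support → i = j

section

variable {V : Type*}

theorem Separates.symm {G : SimpleGraph V} {A B S : Finset V} (h : Separates G A B S) :
    Separates G B A S := by
  intro b hb a ha w
  obtain ⟨v, hv, hS⟩ := h a ha b hb w.reverse
  exact ⟨v, by simpa using hv, hS⟩

theorem Linked.symm {G : SimpleGraph V} {A B : Finset V} {k : ℕ} (h : Linked G A B k) :
    Linked G B A k := by
  obtain ⟨a, b, P, ha, hb, hP, hd⟩ := h
  refine ⟨b, a, fun i => (P i).reverse, hb, ha, fun i => (hP i).reverse, fun i j v hi hj => ?_⟩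
  exact hd i j v (by simpa using hi) (by simpa using hj)

theorem Linked.mono {G H : SimpleGraph V} (hle : H ≤ G) {A B : Finset V} {k : ℕ}
    (h : Linked H A B k) : Linked G A B k := by
  obtain ⟨a, b, P, ha, hb, hP, hd⟩ := h
  refine ⟨a, b, fun i => (P i).mapLe hle, ha, hb, fun i => (hP i).mapLe hle, fun i j v hi hj => ?_⟩
  exact hd i j v (by simpa using hi) (by simpa using hj)

/-! ### Deleting an edge -/

/-- If `G` is `H` together with the edge `xy`, then a walk of `G` followed until it first uses
the edge `xy` is a walk of `H` that ends in `x` or `y`, or else is the whole walk. -/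
theorem walk_until_edge {G H : SimpleGraph V} {x y : V}
    (hGH : ∀ u v, G.Adj u v → H.Adj u v ∨ (u = x ∧ v = y) ∨ (u = y ∧ v = x))
    {a b : V} (w : G.Walk a b) :
    ∃ c, (c = b ∨ c = x ∨ c = y) ∧ ∃ w' : H.Walk a c, w'.support ⊆ w.support := by
  induction w with
  | nil => exact ⟨_, Or.inl rfl, Walk.nil, by simp⟩
  | @cons u v z h p ih =>
    rcases hGH _ _ h with h' | ⟨rfl, -⟩ | ⟨rfl, -⟩
    · obtain ⟨c, hc, w', hw'⟩ := ih
      refine ⟨c, hc, Walk.cons h' w', ?_⟩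
      simp only [Walk.support_cons]
      exact List.cons_subset_cons _ hw'
    · exact ⟨u, by simp, Walk.nil, by simp⟩
    · exact ⟨u, by simp, Walk.nil, by simp⟩

/-- Let `G` be `H` plus the edge `xy`, and let `S` separate `A` from `B` and from `y` in `H`.
Then a set separating `A` from `S ∪ {x}` in `H` separates `A` from `B` in `G`. -/
theorem Separates.of_insert [DecidableEq V] {G H : SimpleGraph V} {x y : V}
    (hGH : ∀ u v, G.Adj u v → H.Adj u v ∨ (u = x ∧ v = y) ∨ (u = y ∧ v = x))
    {A B S T : Finset V} (hS : Separates H A B S) (hy : Separates H A {y} S)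
    (hT : Separates H A (insert x S) T) : Separates G A B T := by
  intro a ha b hb w
  obtain ⟨c, hc, w', hw'⟩ := walk_until_edge hGH w
  have key : c = x ∨ ∃ v ∈ w'.support, v ∈ S := by
    rcases hc with rfl | rfl | rfl
    · exact Or.inr (hS a ha c hb w')
    · exact Or.inl rfl
    · exact Or.inr (hy a ha c (by simp) w')
  rcases key with rfl | ⟨v, hv, hvS⟩
  · obtain ⟨t, ht, htT⟩ := hT a ha c (by simp) w'
    exact ⟨t, hw' ht, htT⟩
  · obtain ⟨t, ht, htT⟩ := hT a ha v (by simp [hvS]) (w'.takeUntil v hv)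
    exact ⟨t, hw' (w'.support_takeUntil_subset_support hv ht), htT⟩

/-! ### Gluing linkages -/

/-- Suppose `S` separates `A` from `B`, that a path `p` starting in `A` can meet `S` only in its
last vertex, and a path `q` ending in `B` only in its first vertex. Then a common vertex of `p`
and `q` lies in `S`, and hence is the end of `p` and the start of `q`. -/
theorem meet_mem [DecidableEq V] {H : SimpleGraph V} {A B S : Finset V}
    (hS : Separates H A B S) {a t u b : V} (ha : a ∈ A) (hb : b ∈ B)
    {p : H.Walk a t} (hp : p.IsPath) {q : H.Walk u b} (hq : q.IsPath)
    (hpS : ∀ v ∈ p.support, v ∈ S → v = t) (hqS : ∀ v ∈ q.support, v ∈ S → v = u)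
    {v : V} (hvp : v ∈ p.support) (hvq : v ∈ q.support) : v ∈ S ∧ v = t ∧ v = u := by
  have hvS : v ∈ S := by
    obtain ⟨z, hz, hzS⟩ := hS a ha b hb ((p.takeUntil v hvp).append (q.dropUntil v hvq))
    rw [Walk.mem_support_append_iff] at hz
    rcases hz with hz | hz
    · have hzt := hpS z (p.support_takeUntil_subset_support hvp hz) hzS
      subst hzt
      by_cases hvz : v = z
      · rwa [hvz]
      · exact absurd hz (Walk.endpoint_notMem_support_takeUntil hp hvp (Ne.symm hvz))
    · have hzu := hqS z (q.support_dropUntil_subset_support hvq hz) hzS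
      subst hzu
      by_cases hvz : v = z
      · rwa [hvz]
      · -- a path does not return to its start `z` after `v ≠ z`
        have hnd : ((q.takeUntil v hvq).append (q.dropUntil v hvq)).IsPath := by
          rwa [Walk.take_spec]
        rw [Walk.isPath_def, Walk.support_append] at hnd
        have hz' : z ∈ (q.dropUntil v hvq).support.tail := by
          rw [Walk.mem_support_iff] at hz
          exact hz.resolve_left (fun h => hvz h.symm)
        exact absurd hz' (List.disjoint_of_nodup_append hnd (Walk.start_mem_support _))
  exact ⟨hvS, hpS v hvp hvS, hqS v hvq hvS⟩

/-- `k` distinct elements of a set with at most `k` elements exhaust it: the ends of `k` disjoint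
paths to `T` are all of `T`. -/
theorem end_surj {k : ℕ} {T : Finset V} (hT : T.card ≤ k) {b : Fin k → V}
    (hb : ∀ i, b i ∈ T) (hinj : Function.Injective b) {v : V} (hv : v ∈ T) : ∃ i, b i = v := by
  have h := Finset.surj_on_of_inj_on_of_card_le (s := (Finset.univ : Finset (Fin k))) (t := T)
    (fun i _ => b i) (fun i _ => hb i) (fun i j _ _ h => hinj h) (by simpa using hT) v hv
  obtain ⟨i, -, h⟩ := h
  exact ⟨i, h.symm⟩

/-- The gluing step of Göring's proof: linkages from `A` to `S ∪ {x}` and from `S ∪ {y}` to `B`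
are joined along `S` and the edge `xy`. -/
theorem Linked.glue [DecidableEq V] {G H : SimpleGraph V} (hle : H ≤ G) {x y : V}
    (hxy : G.Adj x y) {A B S : Finset V} {k : ℕ} (hS : Separates H A B S) (hcard : S.card < k)
    (hA : Linked H A (insert x S) k) (hB : Linked H (insert y S) B k) : Linked G A B k := by
  obtain ⟨a, t, P, ha, ht, hP, hPd⟩ := hA
  obtain ⟨u, b, Q, hu, hb, hQ, hQd⟩ := hB
  have htinj : Function.Injective t := fun i j h =>
    hPd i j (t i) (Walk.end_mem_support _) (by rw [h]; exact Walk.end_mem_support _)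
  have huinj : Function.Injective u := fun i j h =>
    hQd i j (u i) (Walk.start_mem_support _) (by rw [h]; exact Walk.start_mem_support _)
  have htsurj : ∀ v ∈ insert x S, ∃ i, t i = v := fun v hv =>
    end_surj ((Finset.card_insert_le _ _).trans hcard) ht htinj hv
  have husurj : ∀ v ∈ insert y S, ∃ i, u i = v := fun v hv =>
    end_surj ((Finset.card_insert_le _ _).trans hcard) hu huinj hv
  have hPS : ∀ i, ∀ v ∈ (P i).support, v ∈ S → v = t i := by
    intro i v hv hvS
    obtain ⟨j, rfl⟩ := htsurj v (Finset.mem_insert_of_mem hvS)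
    rw [hPd i j _ hv (Walk.end_mem_support _)]
  have hQS : ∀ i, ∀ v ∈ (Q i).support, v ∈ S → v = u i := by
    intro i v hv hvS
    obtain ⟨j, rfl⟩ := husurj v (Finset.mem_insert_of_mem hvS)
    rw [hQd i j _ hv (Walk.start_mem_support _)]
  -- `k` distinct ends in `S ∪ {x}` force `x ∉ S`
  have hxS : x ∉ S := by
    intro hx
    have h1 : Fintype.card (Fin k) ≤ S.card := by
      rw [← Finset.card_univ]
      refine Finset.card_le_card_of_injOn t (fun i _ => ?_) htinj.injOn
      simpa [Finset.insert_eq_of_mem hx] using ht i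
    simp at h1
    omega
  have key : ∀ i, ∃ j, ((t i ∈ S ∧ t i = u j) ∨ (t i = x ∧ u j = y)) ∧
      ∃ w : G.Walk (a i) (b j), w.IsPath ∧
        ∀ v ∈ w.support, v ∈ (P i).support ∨ v ∈ (Q j).support := by
    intro i
    by_cases hi : t i = x
    · obtain ⟨j, hj⟩ := husurj y (Finset.mem_insert_self _ _)
      have hadj : G.Adj (t i) (u j) := by rw [hi, hj]; exact hxy
      refine ⟨j, Or.inr ⟨hi, hj⟩,
        (((P i).mapLe hle).append (Walk.cons hadj ((Q j).mapLe hle))).bypass,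
        Walk.bypass_isPath _, fun v hv => ?_⟩
      have hv' := Walk.support_bypass_subset_support _ hv
      rw [Walk.mem_support_append_iff, Walk.support_cons, List.mem_cons] at hv'
      rcases hv' with h | rfl | h
      · exact Or.inl (by simpa using h)
      · exact Or.inl (Walk.end_mem_support _)
      · exact Or.inr (by simpa using h)
    · have htS : t i ∈ S := (Finset.mem_insert.1 (ht i)).resolve_left hi
      obtain ⟨j, hj⟩ := husurj (t i) (Finset.mem_insert_of_mem htS)
      refine ⟨j, Or.inl ⟨htS, hj.symm⟩,
        (((P i).mapLe hle).append (((Q j).mapLe hle).copy hj rfl)).bypass,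
        Walk.bypass_isPath _, fun v hv => ?_⟩
      have hv' := Walk.support_bypass_subset_support _ hv
      rw [Walk.mem_support_append_iff] at hv'
      rcases hv' with h | h
      · exact Or.inl (by simpa using h)
      · exact Or.inr (by simpa using h)
  choose j hj w hw hsupp using key
  have hjinj : ∀ i i', j i = j i' → i = i' := by
    intro i i' h
    apply htinj
    rcases hj i with ⟨h1, h2⟩ | ⟨h1, h2⟩ <;> rcases hj i' with ⟨h3, h4⟩ | ⟨h3, h4⟩
    · rw [h2, h4, h]
    · -- here `y = t i` lies in `S`, so `k` distinct vertices `u l` lie in `S`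
      exfalso
      have hyS : y ∈ S := by rw [← h4, ← h, ← h2]; exact h1
      have h5 : Fintype.card (Fin k) ≤ S.card := by
        rw [← Finset.card_univ]
        refine Finset.card_le_card_of_injOn u (fun l _ => ?_) huinj.injOn
        simpa [Finset.insert_eq_of_mem hyS] using hu l
      simp at h5
      omega
    · exfalso
      have hyS : y ∈ S := by rw [← h2, h, ← h4]; exact h3
      have h5 : Fintype.card (Fin k) ≤ S.card := by
        rw [← Finset.card_univ]
        refine Finset.card_le_card_of_injOn u (fun l _ => ?_) huinj.injOn
        simpa [Finset.insert_eq_of_mem hyS] using hu l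
      simp at h5
      omega
    · rw [h1, h3]
  have cross : ∀ i i' v, v ∈ (P i).support → v ∈ (Q (j i')).support → i = i' := by
    intro i i' v hv hv'
    obtain ⟨hvS, h1, h2⟩ := meet_mem hS (ha i) (hb (j i')) (hP i) (hQ (j i')) (hPS i)
      (hQS (j i')) hv hv'
    apply hjinj
    rcases hj i with ⟨-, h3⟩ | ⟨h3, -⟩
    · exact huinj (by rw [← h3, ← h1, h2])
    · exact absurd (by rwa [h1, h3] at hvS) hxS
  refine ⟨a, fun i => b (j i), w, ha, fun i => hb _, hw, fun i i' v hv hv' => ?_⟩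
  rcases hsupp i v hv with h | h <;> rcases hsupp i' v hv' with hi | hi
  · exact hPd i i' v h hi
  · exact cross i i' v h hi
  · exact (cross i' i v hi h).symm
  · exact hjinj i i' (hQd _ _ v h hi)

/-! ### The set version of the Menger theorem -/

/-- The induction step of Göring's proof, with the ends of the deleted edge oriented so that `x`
is on the side of `A` and `y` on the side of `B` with respect to the separator `S` of `H`. -/
theorem goring_step [DecidableEq V] {G H : SimpleGraph V} (hle : H ≤ G) {x y : V}
    (hxy : G.Adj x y)
    (hGH : ∀ u v, G.Adj u v → H.Adj u v ∨ (u = x ∧ v = y) ∨ (u = y ∧ v = x))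
    {A B S : Finset V} {k : ℕ}
    (ih : ∀ A B : Finset V, (∀ S, Separates H A B S → k ≤ S.card) → Linked H A B k)
    (hG : ∀ T, Separates G A B T → k ≤ T.card)
    (hS : Separates H A B S) (hcard : S.card < k)
    (hAy : Separates H A {y} S) (hBx : Separates H B {x} S) : Linked G A B k := by
  refine Linked.glue hle hxy hS hcard (ih _ _ fun T hT => ?_)
    (Linked.symm (ih _ _ fun T hT => ?_))
  · exact hG T (hS.of_insert hGH hAy hT)
  · refine hG T (Separates.symm (hS.symm.of_insert (x := y) (y := x) ?_ hBx hT))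
    intro u v h
    rcases hGH u v h with h | h | h
    · exact Or.inl h
    · exact Or.inr (Or.inr h)
    · exact Or.inr (Or.inl h)

/-- If `v` is reachable from `B` while avoiding the `A`–`B` separator `S`, then `S` separates
`A` from `v`. -/
theorem Separates.singleton {H : SimpleGraph V} {A B S : Finset V} (hS : Separates H A B S)
    {b v : V} (hb : b ∈ B) (w : H.Walk b v) (hw : ∀ z ∈ w.support, z ∉ S) :
    Separates H A {v} S := by
  intro a ha v' hv' p
  obtain rfl := Finset.mem_singleton.1 hv'
  obtain ⟨z, hz, hzS⟩ := hS a ha b hb (p.append w.reverse)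
  rw [Walk.mem_support_append_iff] at hz
  rcases hz with hz | hz
  · exact ⟨z, hz, hzS⟩
  · exact absurd hzS (hw z (by simpa using hz))

/-- **Menger's theorem** (set version). -/
theorem menger [Fintype V] [DecidableEq V] (k : ℕ) (G : SimpleGraph V) :
    ∀ A B : Finset V, (∀ S, Separates G A B S → k ≤ S.card) → Linked G A B k := by
  induction G using WellFoundedLT.induction with
  | ind G IH =>
  intro A B hG
  by_cases hbot : ∃ x y, G.Adj x y
  · obtain ⟨x, y, hxy⟩ := hbot
    set H := G.deleteEdges {s(x, y)} with hH
    have hle : H ≤ G := G.deleteEdges_le _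
    have hlt : H < G := lt_of_le_of_ne hle (fun h => by
      have h1 : H.Adj x y := by rw [h]; exact hxy
      simp [hH] at h1)
    have hGH : ∀ u v, G.Adj u v → H.Adj u v ∨ (u = x ∧ v = y) ∨ (u = y ∧ v = x) := by
      intro u v h
      simp only [hH, SimpleGraph.deleteEdges_adj, Set.mem_singleton_iff, Sym2.eq_iff]
      tauto
    have ih := IH H hlt
    by_cases hsep : ∀ S, Separates H A B S → k ≤ S.card
    · exact (ih A B hsep).mono hle
    push Not at hsep
    obtain ⟨S, hS, hcard⟩ := hsep
    have hnS : ¬ Separates G A B S := fun h => absurd (hG S h) (by omega)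
    unfold Separates at hnS
    push Not at hnS
    obtain ⟨a, ha, b, hb, w, hw⟩ := hnS
    -- a walk avoiding `S` runs through `xy`: it gives an end reachable from each side
    obtain ⟨c, hc, p, hp⟩ := walk_until_edge hGH w
    obtain ⟨d, hd, q, hq⟩ := walk_until_edge hGH w.reverse
    have hp' : ∀ z ∈ p.support, z ∉ S := fun z hz => hw z (hp hz)
    have hq' : ∀ z ∈ q.support, z ∉ S := fun z hz => hw z (by simpa using hq hz)
    have hBc := hS.symm.singleton ha p hp'
    have hAd := hS.singleton hb q hq'
    have hcb : c ≠ b := by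
      rintro rfl
      obtain ⟨z, hz, hzS⟩ := hS a ha c hb p
      exact hp' z hz hzS
    have hda : d ≠ a := by
      rintro rfl
      obtain ⟨z, hz, hzS⟩ := hS.symm b hb d ha q
      exact hq' z hz hzS
    have hcd : c ≠ d := by
      rintro rfl
      obtain ⟨z, hz, hzS⟩ := hAd a ha c (by simp) p
      exact hp' z hz hzS
    rcases hc.resolve_left hcb with rfl | rfl <;> rcases hd.resolve_left hda with rfl | rfl
    · exact absurd rfl hcd
    · exact goring_step hle hxy hGH ih hG hS hcard hAd hBc
    · exact goring_step hle hxy.symm (fun u v h => (hGH u v h).imp_right Or.symm) ih hG hS hcard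
        hAd hBc
    · exact absurd rfl hcd
  · -- without edges, `A ∩ B` separates, and its vertices are trivial paths
    push Not at hbot
    have hk : k ≤ (A ∩ B).card := by
      apply hG
      intro a ha b hb w
      cases w with
      | nil => exact ⟨a, by simp, by simp [ha, hb]⟩
      | cons h p => exact absurd h (hbot _ _)
    obtain ⟨f⟩ : Nonempty (Fin k ↪ (A ∩ B : Finset V)) :=
      Function.Embedding.nonempty_of_card_le (by simpa only [Fintype.card_fin, Fintype.card_coe] using hk)
    have hf : ∀ i, (f i : V) ∈ A ∧ (f i : V) ∈ B := fun i => Finset.mem_inter.1 (f i).2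
    refine ⟨fun i => f i, fun i => f i, fun i => Walk.nil, fun i => (hf i).1, fun i => (hf i).2,
      fun i => Walk.IsPath.nil, fun i j v hi hj => ?_⟩
    simp only [Walk.support_nil, List.mem_singleton] at hi hj
    exact f.injective (Subtype.ext (hi.symm.trans hj))

/-! ### From sets to fans -/

/-- A walk ending in `Y` can be cut at its first vertex in `Y`. -/
theorem walk_until_mem {G : SimpleGraph V} {Y : Finset V} {a b : V} (w : G.Walk a b)
    (hb : b ∈ Y) : ∃ c ∈ Y, ∃ p : G.Walk a c, p.support ⊆ w.support ∧
      ∀ v ∈ p.support, v ∈ Y → v = c := by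
  induction w with
  | nil => exact ⟨_, hb, Walk.nil, by simp, by simp⟩
  | @cons u v z h p ih =>
    by_cases hu : u ∈ Y
    · exact ⟨u, hu, Walk.nil, by simp, by simp⟩
    · obtain ⟨c, hc, q, hq, hqY⟩ := ih hb
      refine ⟨c, hc, Walk.cons h q, ?_, ?_⟩
      · simp only [Walk.support_cons]
        exact List.cons_subset_cons _ hq
      · intro t ht htY
        rw [Walk.support_cons, List.mem_cons] at ht
        rcases ht with rfl | ht
        · exact absurd htY hu
        · exact hqY t ht htY

/-- The graph `G - x`, kept on the same vertex type, with `x` as an isolated vertex. -/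
def isolate (G : SimpleGraph V) (x : V) : SimpleGraph V where
  Adj u v := G.Adj u v ∧ u ≠ x ∧ v ≠ x
  symm := ⟨fun _ _ h => ⟨h.1.symm, h.2.2, h.2.1⟩⟩
  loopless := ⟨fun _ h => G.irrefl h.1⟩

theorem isolate_le (G : SimpleGraph V) (x : V) : isolate G x ≤ G := fun _ _ h => h.1

theorem isolate_walk {G : SimpleGraph V} {x a b : V} (w : (isolate G x).Walk a b) (ha : a ≠ x) :
    x ∉ w.support := by
  induction w with
  | nil => simpa using ha.symm
  | cons h p ih =>
    rw [Walk.support_cons, List.mem_cons, not_or]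
    exact ⟨ha.symm, ih h.2.2⟩

theorem walk_to_isolate {G : SimpleGraph V} {x a b : V} (w : G.Walk a b) (hw : x ∉ w.support) :
    ∃ p : (isolate G x).Walk a b, p.support = w.support := by
  induction w with
  | nil => exact ⟨Walk.nil, by simp⟩
  | cons h p ih =>
    rw [Walk.support_cons, List.mem_cons, not_or] at hw
    obtain ⟨q, hq⟩ := ih hw.2
    have hadj : (isolate G x).Adj _ _ :=
      ⟨h, Ne.symm hw.1, fun hvx => hw.2 (hvx ▸ Walk.start_mem_support p)⟩
    exact ⟨Walk.cons hadj q, by rw [Walk.support_cons, hq, Walk.support_cons]⟩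

/-- In an `s`-connected graph, a set separating the neighbours of `x` from `Y` in `G - x` has at
least `min s |Y|` vertices. -/
theorem card_separator [Fintype V] [DecidableEq V] {G : SimpleGraph V} {s : ℕ}
    (hconn : SConnected G s) {x : V} {Y N : Finset V} (hx : x ∉ Y)
    (hN : ∀ v, v ∈ N ↔ G.Adj x v) {S : Finset V} (hS : Separates (isolate G x) N Y S) :
    min s Y.card ≤ S.card := by
  by_contra! hlt
  rw [lt_min_iff] at hlt
  obtain ⟨y, hyY, hyS⟩ := Finset.exists_mem_notMem_of_card_lt_card hlt.2
  -- `x` itself may belong to `S`, hence the deletion of `S \ {x}` instead of `S`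
  have hc := hconn.2 (S.erase x : Finset V) (by
    rw [Set.ncard_coe_finset]
    exact (Finset.card_erase_le).trans_lt hlt.1)
  obtain ⟨w⟩ := hc.preconnected ⟨x, by simp⟩ ⟨y, by simp [hyS]⟩
  have hw : ∀ v ∈ (w.map (Embedding.induce _).toHom).support, v ∉ S.erase x := by
    intro v hv
    rw [Walk.support_map, List.mem_map] at hv
    obtain ⟨z, -, rfl⟩ := hv
    exact z.2
  have hw' : ∀ v ∈ (w.map (Embedding.induce _).toHom).bypass.support, v ∉ S.erase x :=
    fun v hv => hw v (Walk.support_bypass_subset_support _ hv)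
  have hpath := Walk.bypass_isPath (w.map (Embedding.induce _).toHom)
  obtain ⟨p, hp⟩ : ∃ p : G.Walk x y, p.IsPath ∧ ∀ v ∈ p.support, v ∉ S.erase x :=
    ⟨_, hpath, hw'⟩
  cases p with
  | nil => exact hx hyY
  | cons h q =>
    rw [Walk.cons_isPath_iff] at hp
    obtain ⟨r, hr⟩ := walk_to_isolate q hp.1.2
    obtain ⟨v, hv, hvS⟩ := hS _ ((hN _).2 h) y hyY r
    rw [hr] at hv
    refine hp.2 v (by simp [hv]) (Finset.mem_erase.2 ⟨?_, hvS⟩)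
    rintro rfl
    exact hp.1.2 hv

end

/-- Menger-type fan lemma: in an `s`-connected graph `G` (`s ≥ 1`), for a vertex `x` and a
nonempty vertex set `Y` with `x ∉ Y`, setting `m = min s |Y|`, there are `m` distinct
vertices `y i ∈ Y` and `m` paths from `x` to the `y i` that each meet `Y` only in their
endpoint and pairwise share no vertex other than `x`. -/
theorem statement3 {V : Type*} [Fintype V] [DecidableEq V] (G : SimpleGraph V) (s : ℕ)
    (hs : 1 ≤ s) (hconn : SConnected G s) (x : V) (Y : Finset V) (hY : Y.Nonempty)
    (hx : x ∉ Y) :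
    ∃ y : Fin (min s Y.card) → V, Function.Injective y ∧ (∀ i, y i ∈ Y) ∧
      ∃ P : ∀ i, G.Walk x (y i),
        (∀ i, (P i).IsPath) ∧
        (∀ i, ∀ v ∈ (P i).support, v ∈ Y → v = y i) ∧
        (∀ i j, i ≠ j → ∀ v, v ∈ (P i).support → v ∈ (P j).support → v = x) := by
  classical
  obtain ⟨a, b, P, ha, hb, -, hd⟩ := menger (min s Y.card) (isolate G x)
    (Finset.univ.filter fun v => G.Adj x v) Y
    (fun S hS => card_separator hconn hx (fun v => by simp) hS)
  have ha' : ∀ i, G.Adj x (a i) := fun i => by simpa using ha i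
  choose y hyY p hp hpY using fun i => walk_until_mem (P i) (hb i)
  have hdy : ∀ i j v, v ∈ (p i).support → v ∈ (p j).support → i = j :=
    fun i j v hi hj => hd i j v (hp i hi) (hp j hj)
  have hsupp : ∀ i, ∀ v ∈ (Walk.cons (ha' i) ((p i).mapLe (isolate_le G x))).bypass.support,
      v = x ∨ v ∈ (p i).support := by
    intro i v hv
    have h := Walk.support_bypass_subset_support _ hv
    rw [Walk.support_cons, List.mem_cons] at h
    exact h.imp_right fun h => by simpa using h
  refine ⟨y, fun i j h => hdy i j (y i) (Walk.end_mem_support _)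
      (by rw [h]; exact Walk.end_mem_support _),
    hyY, fun i => (Walk.cons (ha' i) ((p i).mapLe (isolate_le G x))).bypass,
    fun i => Walk.bypass_isPath _, ?_, ?_⟩
  · intro i v hv hvY
    rcases hsupp i v hv with rfl | h
    · exact absurd hvY hx
    · exact hpY i v h hvY
  · intro i j hij v hi hj
    rcases hsupp i v hi with h | h
    · exact h
    rcases hsupp j v hj with h' | h'
    · exact h'
    · exact absurd (hdy i j v h h') hij
end

section
/- Let ℓ ≥ 1 be an integer and let G be a connected finite simple graph. Construct a graph G' from G by adding 2ℓ new vertices s₁, …, s_ℓ, t₁, …, t_ℓ, together with the edges s₁s_i, s_it_i and t_it₁ for each i = 2, …, ℓ, and the edges s₁v and t₁v for every vertex v of G. Then G' has a Hamiltonian linkage for s₁, …, s_ℓ, t₁, …, t_ℓ (that is, ℓ pairwise vertex-disjoint paths P₁, …, P_ℓ with endpoints s_i and t_i that together cover all vertices of G') if and only if G has a Hamiltonian path. -/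
/-!
Every vertex of `G'` has a natural owner index: `sᵢ` and `tᵢ` are owned by `i`, and the vertices
of `G` are owned by the first index. The point is that the paths of a
Hamiltonian linkage are forced to have exactly the vertices they own.

Given a linkage, for `i ≠ 1` the path `Pᵢ` avoids `s₁` and `t₁` by disjointness, and the only
neighbours of `sᵢ` and `tᵢ` outside `{s₁, t₁}` are each other; hence `Pᵢ` stays in `{sᵢ, tᵢ}`
(`support_subset_of_avoid`). So `P₁` visits `s₁`, `t₁` and all of `V`, and nothing else; stripping
its two ends leaves a Hamiltonian path of `G` (`exists_walk_of_path`). Conversely, a Hamiltonian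
path of `G` extended by `s₁` and `t₁`, together with the edges `sᵢtᵢ`, is a linkage
(`exists_path_of_hamiltonian`).
-/

open SimpleGraph

/-- The graph `G'` obtained from `G` by adding `2ℓ` new vertices
`s₁, …, s_ℓ` (encoded `Sum.inr (Sum.inl i)`) and `t₁, …, t_ℓ` (encoded `Sum.inr (Sum.inr i)`),
with edges `s₁sᵢ`, `sᵢtᵢ`, `tᵢt₁` for all `i ≠ 1`, and edges `s₁v`, `t₁v` for every
vertex `v` of `G`. -/
def extLinkage {V : Type*} (G : SimpleGraph V) (ℓ : ℕ) [NeZero ℓ] :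
    SimpleGraph (V ⊕ (Fin ℓ ⊕ Fin ℓ)) :=
  SimpleGraph.fromRel (fun a b =>
    (∃ u v, a = Sum.inl u ∧ b = Sum.inl v ∧ G.Adj u v) ∨
    (∃ i : Fin ℓ, i ≠ 0 ∧ a = Sum.inr (Sum.inl 0) ∧ b = Sum.inr (Sum.inl i)) ∨
    (∃ i : Fin ℓ, i ≠ 0 ∧ a = Sum.inr (Sum.inl i) ∧ b = Sum.inr (Sum.inr i)) ∨
    (∃ i : Fin ℓ, i ≠ 0 ∧ a = Sum.inr (Sum.inr i) ∧ b = Sum.inr (Sum.inr 0)) ∨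
    (∃ v : V, a = Sum.inr (Sum.inl 0) ∧ b = Sum.inl v) ∨
    (∃ v : V, a = Sum.inr (Sum.inr 0) ∧ b = Sum.inl v))

section Adjacency

variable {V : Type*} {G : SimpleGraph V} {ℓ : ℕ} [NeZero ℓ]

lemma extLinkage_adj_inl_inl {u v : V} :
    (extLinkage G ℓ).Adj (Sum.inl u) (Sum.inl v) ↔ G.Adj u v := by
  simp only [extLinkage, SimpleGraph.fromRel_adj]
  constructor
  · rintro ⟨-, h⟩
    simpa [G.adj_comm v u] using h
  · intro h
    simp [h, h.ne]

lemma extLinkage_adj_s_inl (v : V) :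
    (extLinkage G ℓ).Adj (Sum.inr (Sum.inl 0)) (Sum.inl v) := by
  simp [extLinkage]

lemma extLinkage_adj_inl_t (v : V) :
    (extLinkage G ℓ).Adj (Sum.inl v) (Sum.inr (Sum.inr 0)) := by
  simp [extLinkage]

lemma extLinkage_adj_s_t {i : Fin ℓ} (hi : i ≠ 0) :
    (extLinkage G ℓ).Adj (Sum.inr (Sum.inl i)) (Sum.inr (Sum.inr i)) := by
  simp [extLinkage, hi]

lemma not_extLinkage_adj_s_t_zero :
    ¬ (extLinkage G ℓ).Adj (Sum.inr (Sum.inl 0)) (Sum.inr (Sum.inr 0)) := by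
  simp [extLinkage]

/-- Away from `s₁` and `t₁`, the pair `{sᵢ, tᵢ}` with `i ≠ 1` has no neighbours outside itself. -/
lemma extLinkage_adj_pair {i : Fin ℓ} (hi : i ≠ 0) {x y : V ⊕ (Fin ℓ ⊕ Fin ℓ)}
    (hx : x = Sum.inr (Sum.inl i) ∨ x = Sum.inr (Sum.inr i))
    (h : (extLinkage G ℓ).Adj x y)
    (hs : y ≠ Sum.inr (Sum.inl 0)) (ht : y ≠ Sum.inr (Sum.inr 0)) :
    y = Sum.inr (Sum.inl i) ∨ y = Sum.inr (Sum.inr i) := by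
  rcases hx with rfl | rfl <;> rcases y with v | j | j <;> simp_all [extLinkage]

end Adjacency

section Walks

variable {V : Type*} {G : SimpleGraph V} {ℓ : ℕ} [NeZero ℓ]

/-- A walk that starts in `{sᵢ, tᵢ}`, `i ≠ 1`, and avoids `s₁` and `t₁` never leaves `{sᵢ, tᵢ}`. -/
lemma support_subset_of_avoid {i : Fin ℓ} (hi : i ≠ 0) {x y : V ⊕ (Fin ℓ ⊕ Fin ℓ)}
    (q : (extLinkage G ℓ).Walk x y)
    (hx : x = Sum.inr (Sum.inl i) ∨ x = Sum.inr (Sum.inr i))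
    (hs : Sum.inr (Sum.inl 0) ∉ q.support) (ht : Sum.inr (Sum.inr 0) ∉ q.support) :
    ∀ z ∈ q.support, z = Sum.inr (Sum.inl i) ∨ z = Sum.inr (Sum.inr i) := by
  induction q with
  | nil => simpa using hx
  | @cons a b c h q ih =>
    simp only [SimpleGraph.Walk.support_cons, List.mem_cons, not_or] at hs ht
    have hb : b = Sum.inr (Sum.inl i) ∨ b = Sum.inr (Sum.inr i) :=
      extLinkage_adj_pair hi hx h
        (fun e => hs.2 (e ▸ q.start_mem_support)) (fun e => ht.2 (e ▸ q.start_mem_support))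
    intro z hz
    rw [SimpleGraph.Walk.support_cons, List.mem_cons] at hz
    rcases hz with rfl | hz
    · exact hx
    · exact ih hb hs.2 ht.2 z hz

/-- A path from a vertex of `G` to `t₁` with all other vertices in `G` is a walk of `G` followed
by a last step to `t₁`. -/
lemma exists_walk_of_path {x y : V ⊕ (Fin ℓ ⊕ Fin ℓ)} (q : (extLinkage G ℓ).Walk x y)
    (hq : q.IsPath) (hy : y = Sum.inr (Sum.inr 0)) {w : V} (hx : x = Sum.inl w)
    (hsup : ∀ z ∈ q.support, z = Sum.inr (Sum.inr 0) ∨ ∃ v, z = Sum.inl v) :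
    ∃ (v : V) (p : G.Walk w v), q.support = p.support.map Sum.inl ++ [Sum.inr (Sum.inr 0)] := by
  induction q generalizing w with
  | nil => subst hx; cases hy
  | @cons a b c h q ih =>
    subst hx
    rw [SimpleGraph.Walk.cons_isPath_iff] at hq
    simp only [SimpleGraph.Walk.support_cons, List.mem_cons] at hsup
    rcases hsup b (Or.inr q.start_mem_support) with hb | ⟨v, rfl⟩
    · -- the path has reached its endpoint, so it cannot continue
      subst hb hy
      have hnil : q = SimpleGraph.Walk.nil := SimpleGraph.Walk.eq_nil_iff_nil.2 (SimpleGraph.Walk.isPath_iff_nil.1 hq.1)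
      subst hnil
      exact ⟨w, SimpleGraph.Walk.nil, by simp⟩
    · obtain ⟨v', p, hp⟩ := ih hq.1 hy rfl (fun z hz => hsup z (Or.inr hz))
      exact ⟨v', SimpleGraph.Walk.cons (extLinkage_adj_inl_inl.1 h) p, by simp [hp]⟩

/-- The index of the path of a Hamiltonian linkage to which a vertex of `G'` must belong: `i` for
`sᵢ` and `tᵢ`, and the first index for the vertices of `G`. -/
def owner : V ⊕ (Fin ℓ ⊕ Fin ℓ) → Fin ℓ
  | Sum.inl _ => 0
  | Sum.inr (Sum.inl i) => i
  | Sum.inr (Sum.inr i) => i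

/-- The path `Pᵢ` of the linkage built from a Hamiltonian path of `G`: for the first index it runs
from `s₁` along that Hamiltonian path to `t₁`, and otherwise it is the edge `sᵢtᵢ`. Its vertices are
exactly those owned by `i`. -/
lemma exists_path_of_hamiltonian [DecidableEq V] {u v : V} (p : G.Walk u v)
    (hp : p.IsHamiltonian) (i : Fin ℓ) :
    ∃ P : (extLinkage G ℓ).Walk (Sum.inr (Sum.inl i)) (Sum.inr (Sum.inr i)),
      P.IsPath ∧ ∀ z, z ∈ P.support ↔ owner z = i := by
  by_cases hi : i = 0
  · subst hi
    let f : G →g extLinkage G ℓ := ⟨Sum.inl, fun h => extLinkage_adj_inl_inl.2 h⟩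
    have hf : Function.Injective f := Sum.inl_injective
    refine ⟨SimpleGraph.Walk.cons (extLinkage_adj_s_inl u)
      ((p.map f).concat (extLinkage_adj_inl_t v)), ?_, ?_⟩
    · rw [SimpleGraph.Walk.cons_isPath_iff, SimpleGraph.Walk.concat_isPath_iff]
      refine ⟨⟨hp.isPath.map hf, ?_⟩, ?_⟩ <;>
        simp [SimpleGraph.Walk.support_concat, f]
    · rintro (w | j | j) <;>
        simp [SimpleGraph.Walk.support_concat, f, owner, hp.mem_support]
  · refine ⟨(extLinkage_adj_s_t hi).toWalk, ?_, ?_⟩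
    · simp [SimpleGraph.Walk.cons_isPath_iff]
    · rintro (w | j | j) <;> simp [owner, Ne.symm hi]

end Walks

/-- `G'` has a Hamiltonian linkage for `s₁, …, s_ℓ, t₁, …, t_ℓ` (pairwise vertex-disjoint
paths `Pᵢ : sᵢ — tᵢ` covering all vertices of `G'`) iff `G` has a Hamiltonian path. -/
theorem statement6 {V : Type*} [Fintype V] [DecidableEq V] (G : SimpleGraph V)
    (hG : G.Connected) (ℓ : ℕ) [NeZero ℓ] :
    (∃ P : ∀ i : Fin ℓ, (extLinkage G ℓ).Walk (Sum.inr (Sum.inl i)) (Sum.inr (Sum.inr i)),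
        (∀ i, (P i).IsPath) ∧
        (∀ i j, i ≠ j → ∀ v, v ∈ (P i).support → v ∉ (P j).support) ∧
        (∀ v, ∃ i, v ∈ (P i).support)) ↔
      ∃ (u v : V) (p : G.Walk u v), p.IsHamiltonian := by
  constructor
  · rintro ⟨P, hpath, hdisj, hcov⟩
    have hother : ∀ i, i ≠ 0 → ∀ z ∈ (P i).support,
        z = Sum.inr (Sum.inl i) ∨ z = Sum.inr (Sum.inr i) := fun i hi =>
      support_subset_of_avoid hi (P i) (Or.inl rfl)
        (hdisj 0 i hi.symm _ (P 0).start_mem_support) (hdisj 0 i hi.symm _ (P 0).end_mem_support)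
    have hV : ∀ v : V, Sum.inl v ∈ (P 0).support := by
      intro v
      obtain ⟨i, hi⟩ := hcov (Sum.inl v)
      by_cases h0 : i = 0
      · exact h0 ▸ hi
      · simpa using hother i h0 _ hi
    have hsup : ∀ z ∈ (P 0).support, z = Sum.inr (Sum.inl 0) ∨
        (z = Sum.inr (Sum.inr 0) ∨ ∃ v, z = Sum.inl v) := by
      rintro (v | j | j) hz
      · exact Or.inr (Or.inr ⟨v, rfl⟩)
      · by_cases hj : j = 0
        · simp [hj]
        · exact absurd (P j).start_mem_support (hdisj 0 j (Ne.symm hj) _ hz)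
      · by_cases hj : j = 0
        · simp [hj]
        · exact absurd (P j).end_mem_support (hdisj 0 j (Ne.symm hj) _ hz)
    have hp0 := hpath 0
    generalize P 0 = Q at hV hsup hp0
    cases Q with
    | @cons _ b _ h q =>
      rw [SimpleGraph.Walk.cons_isPath_iff] at hp0
      have hq : ∀ z ∈ q.support, z = Sum.inr (Sum.inr 0) ∨ ∃ v, z = Sum.inl v := by
        intro z hz
        rcases hsup z (by simp [hz]) with rfl | hz'
        · exact absurd hz hp0.2
        · exact hz'
      rcases hq b q.start_mem_support with rfl | ⟨w, rfl⟩
      · exact absurd h not_extLinkage_adj_s_t_zero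
      · obtain ⟨v, p, hp⟩ := exists_walk_of_path q hp0.1 rfl rfl hq
        refine ⟨w, v, p, SimpleGraph.Walk.IsPath.isHamiltonian_of_mem ?_ ?_⟩
        · have hnd := hp0.1.support_nodup
          rw [hp] at hnd
          exact SimpleGraph.Walk.IsPath.mk' (List.Nodup.of_map _ hnd.of_append_left)
        · intro x
          simpa [hp] using hV x
  · rintro ⟨u, v, p, hp⟩
    choose P hP hown using exists_path_of_hamiltonian (ℓ := ℓ) p hp
    refine ⟨P, hP, fun i j hij z hi hj => hij ?_, fun z => ⟨owner z, (hown _ z).2 rfl⟩⟩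
    exact ((hown i z).1 hi).symm.trans ((hown j z).1 hj)
end

section
/- Let ℓ ≥ 1 be an integer and let G be a connected finite simple graph. Construct a graph G' from G by adding ℓ + 3 new vertices a, b, c, d₁, …, d_ℓ, together with the edges au for every vertex u of G, the edges ab and bc, and the edges cd_i for each i = 1, …, ℓ. Then the vertices of G' can be covered by at most ℓ pairwise vertex-disjoint paths if and only if G has a Hamiltonian path; moreover, in that case the path cover number of G' equals ℓ. -/
/-!
If `G` has a Hamiltonian path, starting at `u` say, then `d₀, c, b, a, u, …` followed through `G`
is a path of `G'`, and together with the one-vertex paths `dᵢ`, `i ≠ 0`, it forms a cover by `ℓ`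
paths.

Conversely, take a cover of `G'` by `m ≤ ℓ` paths. Since `c` is the only neighbour of each `dᵢ`, a
path through some `dᵢ` and another vertex runs through `c`.

* If two distinct `dᵢ, dⱼ` share a path, that path consists of `dᵢ, c, dⱼ` only, and all the other
  `dₓ` are covered by one-vertex paths. These `ℓ - 1` paths miss `a`, `b` and `G`, so `m = ℓ` and
  the single remaining path covers `a`, `b` and all of `G`.
* Otherwise the `dᵢ` lie on pairwise different paths, so `m = ℓ` and every path runs through some
  `dᵢ`. Hence a path covering any other vertex also runs through `c`, which means that one path
  covers `a`, `b`, `c` and all of `G`.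

In both cases `m = ℓ` (`cover_structure`), which gives the value of the path cover number, and one
path contains `a`, `b` and all of `G`. Since `a` separates `G` from `b`, removing `a` from this path
leaves two pieces, one of which is a Hamiltonian path of `G` (`hamiltonian_of_list`).
The claim on paths through `dᵢ, dⱼ` and the last step both come from deleting a cut vertex from a
path (`exists_cut`).
Paths are handled through their supports, which are duplicate-free lists with consecutive entries
adjacent.
-/

open SimpleGraph

/-- `G` has a cover of all its vertices by `m` pairwise vertex-disjoint paths. -/
def HasPathCover {V : Type*} (G : SimpleGraph V) (m : ℕ) : Prop :=
  ∃ (s t : Fin m → V) (P : ∀ i, G.Walk (s i) (t i)),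
    (∀ i, (P i).IsPath) ∧
    (∀ i j, i ≠ j → ∀ v, v ∈ (P i).support → v ∉ (P j).support) ∧
    (∀ v, ∃ i, v ∈ (P i).support)

/-- The path cover number of `G`: the least number of pairwise vertex-disjoint paths
covering all vertices of `G`. -/
noncomputable def pathCoverNumber {V : Type*} (G : SimpleGraph V) : ℕ :=
  sInf {m | HasPathCover G m}

/-- The graph `G'` obtained from `G` by adding `ℓ + 3` new vertices
`a = Sum.inr (Sum.inl 0)`, `b = Sum.inr (Sum.inl 1)`, `c = Sum.inr (Sum.inl 2)` and
`d i = Sum.inr (Sum.inr i)` for `i : Fin ℓ`, with edges `au` for every `u` of `G`,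
edges `ab`, `bc`, and edges `c dᵢ` for all `i`. -/
def extPathCover {V : Type*} (G : SimpleGraph V) (ℓ : ℕ) :
    SimpleGraph (V ⊕ (Fin 3 ⊕ Fin ℓ)) :=
  SimpleGraph.fromRel (fun p q =>
    (∃ u v, p = Sum.inl u ∧ q = Sum.inl v ∧ G.Adj u v) ∨
    (∃ u : V, p = Sum.inr (Sum.inl 0) ∧ q = Sum.inl u) ∨
    (p = Sum.inr (Sum.inl 0) ∧ q = Sum.inr (Sum.inl 1)) ∨
    (p = Sum.inr (Sum.inl 1) ∧ q = Sum.inr (Sum.inl 2)) ∨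
    (∃ i : Fin ℓ, p = Sum.inr (Sum.inl 2) ∧ q = Sum.inr (Sum.inr i)))

/-- A property that adjacent entries of a chain share holds for all entries or for none. -/
lemma chain_const {W : Type*} {R : W → W → Prop} {p : W → Prop} {L : List W} (h : L.IsChain R)
    (hp : ∀ x ∈ L, ∀ y ∈ L, R x y → (p x ↔ p y)) : ∀ x ∈ L, ∀ y ∈ L, p x → p y := by
  induction L with
  | nil => simp
  | cons a L ih =>
    have ih' := ih h.tail (fun x hx y hy => hp x (by simp [hx]) y (by simp [hy]))
    cases L with
    | nil => simp
    | cons b L =>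
      have hab := hp a (by simp) b (by simp) h.rel
      intro x hx y hy hpx
      rw [List.mem_cons] at hx hy
      have hb : p b := by
        rcases hx with rfl | hx
        · exact hab.1 hpx
        · exact ih' x hx b (by simp) hpx
      rcases hy with rfl | hy
      · exact hab.2 hb
      · exact ih' b (by simp) y hy hb

/-- If `p` is constant along the edges of `H` avoiding `c`, then a path through `c` splits at `c`
into two pieces on each of which `p` is constant. -/
lemma exists_cut {W : Type*} {H : SimpleGraph W} {L : List W} (h : L.IsChain H.Adj)
    (hn : L.Nodup) {c : W} (hc : c ∈ L) (p : W → Prop)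
    (hp : ∀ x y, H.Adj x y → x ≠ c → y ≠ c → p x → p y) :
    ∃ L₁ L₂, L = L₁ ++ c :: L₂ ∧ (∀ x ∈ L₁, ∀ y ∈ L₁, p x → p y) ∧
      (∀ x ∈ L₂, ∀ y ∈ L₂, p x → p y) := by
  obtain ⟨L₁, L₂, rfl⟩ := List.append_of_mem hc
  have hn' := List.nodup_append.1 hn
  have h1 : c ∉ L₁ := fun h => hn'.2.2 c h c (by simp) rfl
  have h2 : c ∉ L₂ := (List.nodup_cons.1 hn'.2.1).1
  refine ⟨L₁, L₂, rfl, chain_const h.left_of_append ?_, chain_const h.right_of_append.tail ?_⟩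
  all_goals
    intro x hx y hy hxy
    have hxc : x ≠ c := by rintro rfl; contradiction
    have hyc : y ≠ c := by rintro rfl; contradiction
    exact ⟨hp x y hxy hxc hyc, hp y x hxy.symm hyc hxc⟩

/-- Deleting `a` from a path through `a`, `b` and all of `G` leaves a Hamiltonian path of `G` as
one of the two pieces. -/
lemma hamiltonian_of_list {V : Type*} [DecidableEq V] [Nonempty V] {G : SimpleGraph V} {ℓ : ℕ}
    {L : List (V ⊕ (Fin 3 ⊕ Fin ℓ))}
    (h : L.IsChain (extPathCover G ℓ).Adj) (hn : L.Nodup)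
    (ha : Sum.inr (Sum.inl 0) ∈ L) (hb : Sum.inr (Sum.inl 1) ∈ L)
    (hV : ∀ v : V, Sum.inl v ∈ L) :
    ∃ (u v : V) (p : G.Walk u v), p.IsHamiltonian := by
  obtain ⟨L₁, L₂, rfl, h₁, h₂⟩ := exists_cut h hn ha (fun x => ∃ v, x = Sum.inl v) (by
    rintro x y hxy hx hy ⟨v, rfl⟩
    simp only [extPathCover, SimpleGraph.fromRel_adj] at hxy
    grind)
  have key : ∀ K : List (V ⊕ (Fin 3 ⊕ Fin ℓ)), K.IsChain (extPathCover G ℓ).Adj → K.Nodup →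
      (∀ v : V, Sum.inl v ∈ K) → (∀ x ∈ K, ∀ y ∈ K, (∃ v, x = Sum.inl v) → ∃ v, y = Sum.inl v) →
      ∃ (u v : V) (p : G.Walk u v), p.IsHamiltonian := by
    intro K hK hKn hKV hKc
    have hmem : K ∈ Set.range (List.map (Sum.inl : V → V ⊕ (Fin 3 ⊕ Fin ℓ))) := by
      rw [Set.range_list_map]
      intro y hy
      obtain ⟨v, hv⟩ := hKc _ (hKV (Classical.arbitrary V)) y hy ⟨_, rfl⟩
      exact ⟨v, hv.symm⟩
    obtain ⟨M, rfl⟩ := hmem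
    have hM : M.IsChain G.Adj := by
      refine List.isChain_of_isChain_map _ ?_ hK
      intro x y hxy
      simp only [extPathCover, SimpleGraph.fromRel_adj] at hxy
      have := G.adj_symm (u := y) (v := x)
      grind
    have hMV : ∀ v, v ∈ M := by simpa using hKV
    have hne : M ≠ [] := List.ne_nil_of_mem (hMV (Classical.arbitrary V))
    refine ⟨_, _, SimpleGraph.Walk.ofSupport M hne hM, ?_⟩
    apply SimpleGraph.Walk.IsPath.isHamiltonian_of_mem
    · apply SimpleGraph.Walk.IsPath.mk'
      rw [SimpleGraph.Walk.support_ofSupport]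
      exact hKn.of_map _
    · simpa using hMV
  have hn' := List.nodup_append.1 hn
  have hb' : Sum.inr (Sum.inl 1) ∈ L₁ ∨ Sum.inr (Sum.inl 1) ∈ L₂ := by simpa using hb
  have hV' : ∀ v : V, Sum.inl v ∈ L₁ ∨ Sum.inl v ∈ L₂ := by simpa using hV
  rcases hb' with hb' | hb'
  · refine key L₂ h.right_of_append.tail hn'.2.1.of_cons (fun v => (hV' v).resolve_left ?_) h₂
    intro hv
    obtain ⟨w, hw⟩ := h₁ _ hv _ hb' ⟨v, rfl⟩
    cases hw
  · refine key L₁ h.left_of_append hn'.1 (fun v => (hV' v).resolve_right ?_) h₁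
    intro hv
    obtain ⟨w, hw⟩ := h₂ _ hv _ hb' ⟨v, rfl⟩
    cases hw

/-- As `c` is the only neighbour of `dᵢ`, a path through `dᵢ` and another vertex contains `c`. -/
lemma mem_c_of_mem_d {V : Type*} {G : SimpleGraph V} {ℓ : ℕ}
    {L : List (V ⊕ (Fin 3 ⊕ Fin ℓ))} (h : L.IsChain (extPathCover G ℓ).Adj) {i : Fin ℓ}
    (hd : Sum.inr (Sum.inr i) ∈ L) {e : V ⊕ (Fin 3 ⊕ Fin ℓ)} (he : e ∈ L)
    (hne : e ≠ Sum.inr (Sum.inr i)) : Sum.inr (Sum.inl 2) ∈ L := by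
  by_contra hc
  refine hne (chain_const (p := (· = Sum.inr (Sum.inr i))) h ?_ _ hd _ he rfl)
  intro x hx y hy hxy
  simp only [extPathCover, SimpleGraph.fromRel_adj] at hxy
  grind (splits := 20)

/-- A path through `dᵢ` and `dⱼ` splits at `c` into pieces which are constant with respect to being
`dᵢ`, and also with respect to being `dⱼ`, so it contains only `dᵢ`, `dⱼ` and `c`. -/
lemma eq_of_mem_d_d {V : Type*} {G : SimpleGraph V} {ℓ : ℕ}
    {L : List (V ⊕ (Fin 3 ⊕ Fin ℓ))} (h : L.IsChain (extPathCover G ℓ).Adj) (hn : L.Nodup)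
    {i j : Fin ℓ} (hij : i ≠ j)
    (hi : Sum.inr (Sum.inr i) ∈ L) (hj : Sum.inr (Sum.inr j) ∈ L)
    {e : V ⊕ (Fin 3 ⊕ Fin ℓ)} (he : e ∈ L) :
    e = Sum.inr (Sum.inr i) ∨ e = Sum.inr (Sum.inr j) ∨ e = Sum.inr (Sum.inl 2) := by
  have hc := mem_c_of_mem_d h hi hj (by simpa using hij.symm)
  -- Both splittings are at the only occurrence of `c`, hence they coincide.
  obtain ⟨L₁, L₂, rfl, h₁, h₂⟩ := exists_cut h hn hc (· = Sum.inr (Sum.inr i)) (by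
    intro x y hxy hx hy
    simp only [extPathCover, SimpleGraph.fromRel_adj] at hxy
    grind)
  obtain ⟨M₁, M₂, hM, h₃, h₄⟩ := exists_cut h hn hc (· = Sum.inr (Sum.inr j)) (by
    intro x y hxy hx hy
    simp only [extPathCover, SimpleGraph.fromRel_adj] at hxy
    grind)
  have hn' := List.nodup_append.1 hn
  have hc1 : Sum.inr (Sum.inl 2) ∉ L₁ := fun h => hn'.2.2 _ h _ (by simp) rfl
  have hc2 : Sum.inr (Sum.inl 2) ∉ L₂ := (List.nodup_cons.1 hn'.2.1).1
  have hMn := List.nodup_append.1 (hM ▸ hn)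
  have hc3 : Sum.inr (Sum.inl 2) ∉ M₁ := fun h => hMn.2.2 _ h _ (by simp) rfl
  obtain ⟨rfl, rfl⟩ : L₁ = M₁ ∧ L₂ = M₂ := by
    have := (List.append_cons_inj_of_notMem hc1 hc2).1 hM
    grind
  simp only [List.mem_append, List.mem_cons] at hi hj he
  grind

/-- A cover of `G'` by at most `ℓ` paths consists of exactly `ℓ` paths, one of which contains
`a`, `b` and all of `G`. -/
lemma cover_structure {V : Type*} {G : SimpleGraph V} {ℓ m : ℕ} (hm : m ≤ ℓ)
    (L : Fin m → List (V ⊕ (Fin 3 ⊕ Fin ℓ)))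
    (hch : ∀ k, (L k).IsChain (extPathCover G ℓ).Adj) (hn : ∀ k, (L k).Nodup)
    (hdis : ∀ k k', k ≠ k' → ∀ v, v ∈ L k → v ∉ L k') (hcov : ∀ v, ∃ k, v ∈ L k) :
    m = ℓ ∧ ∃ k, Sum.inr (Sum.inl 0) ∈ L k ∧ Sum.inr (Sum.inl 1) ∈ L k ∧
      ∀ v : V, Sum.inl v ∈ L k := by
  choose idx hidx using hcov
  have huniq : ∀ v k, v ∈ L k → idx v = k := fun v k hv => by
    by_contra hne
    exact hdis (idx v) k hne v (hidx v) hv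
  set d : Fin ℓ → V ⊕ (Fin 3 ⊕ Fin ℓ) := fun i => Sum.inr (Sum.inr i) with hd
  have hdc : ∀ i e, e ≠ d i → idx e = idx (d i) → idx (Sum.inr (Sum.inl 2)) = idx (d i) :=
    fun i e hne he => huniq _ _ (mem_c_of_mem_d (hch _) (hidx (d i)) (he ▸ hidx e) hne)
  by_cases hinj : Function.Injective (fun i => idx (d i))
  · have hml : m = ℓ := le_antisymm hm (by simpa using Fintype.card_le_of_injective _ hinj)
    subst hml
    have hsurj := Finite.surjective_of_injective hinj
    have hall : ∀ e, (∀ i, e ≠ d i) → e ∈ L (idx (Sum.inr (Sum.inl 2))) := by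
      intro e he
      obtain ⟨i, hi⟩ := hsurj (idx e)
      have hi' : idx (d i) = idx e := hi
      rw [hdc i e (he i) hi'.symm, hi']
      exact hidx e
    exact ⟨rfl, _, hall _ (by simp [hd]), hall _ (by simp [hd]), fun v => hall _ (by simp [hd])⟩
  · simp only [Function.Injective, not_forall] at hinj
    obtain ⟨i, j, hij, hne⟩ := hinj
    replace hij : idx (d i) = idx (d j) := hij
    -- The path through `dᵢ` and `dⱼ` contains nothing else but `c`.
    have honly : ∀ e, idx e = idx (d i) → e = d i ∨ e = d j ∨ e = Sum.inr (Sum.inl 2) := by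
      intro e he
      exact eq_of_mem_d_d (hch (idx (d i))) (hn _) hne (hidx (d i))
        (hij.symm ▸ hidx (d j)) (he ▸ hidx e)
    have hci : idx (Sum.inr (Sum.inl 2)) = idx (d i) :=
      hdc i (d j) (by simpa [hd] using Ne.symm hne) hij.symm
    -- The paths through the `dₓ`, `x ≠ j`, are pairwise distinct, and the path through a vertex
    -- outside `c` and the `dₓ` is yet another one.
    have hsep : ∀ e x, e ≠ Sum.inr (Sum.inl 2) → (∀ i, e ≠ d i) → idx e ≠ idx (d x) := by
      intro e x hec hed he
      have := honly e (by rw [he, ← hdc x e (hed x) he, hci])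
      have := hed i
      have := hed j
      tauto
    have hdd : ∀ x y, x ≠ j → y ≠ j → idx (d x) = idx (d y) → x = y := by
      intro x y hx hy hxy
      by_contra hne'
      have hcx := hdc x (d y) (by simpa [hd] using Ne.symm hne') hxy.symm
      have h1 := honly (d x) (by rw [← hcx, hci])
      have h2 := honly (d y) (by rw [← hxy, ← hcx, hci])
      simp [hd] at h1 h2
      grind
    have hg : ∀ e, e ≠ Sum.inr (Sum.inl 2) → (∀ i, e ≠ d i) →
        Function.Injective (fun x => if x = j then idx e else idx (d x)) := by
      intro e hec hed x y hxy
      have h1 := hsep e x hec hed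
      have h2 := hsep e y hec hed
      have h3 := hdd x y
      grind
    have hml : m = ℓ := le_antisymm hm (by
      simpa using Fintype.card_le_of_injective _
        (hg (Sum.inr (Sum.inl 0)) (by simp) (by simp [hd])))
    subst hml
    have hsurj := Finite.surjective_of_injective
      (hg (Sum.inr (Sum.inl 0)) (by simp) (by simp [hd]))
    have hall : ∀ e, e ≠ Sum.inr (Sum.inl 2) → (∀ i, e ≠ d i) →
        e ∈ L (idx (Sum.inr (Sum.inl 0))) := by
      intro e hec hed
      obtain ⟨x, hx⟩ := hsurj (idx e)
      have h1 := hsep e x hec hed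
      have h2 := hidx e
      grind
    exact ⟨rfl, _, hidx _, hall _ (by simp) (by simp [hd]),
      fun v => hall _ (by simp) (by simp [hd])⟩

lemma cover_of_hamiltonian {V : Type*} [DecidableEq V] {G : SimpleGraph V} {ℓ : ℕ} (hℓ : 1 ≤ ℓ)
    {u v : V} (p : G.Walk u v) (hp : p.IsHamiltonian) : HasPathCover (extPathCover G ℓ) ℓ := by
  let i₀ : Fin ℓ := ⟨0, hℓ⟩
  have key : ∀ i : Fin ℓ, ∃ (t : V ⊕ (Fin 3 ⊕ Fin ℓ))
      (P : (extPathCover G ℓ).Walk (Sum.inr (Sum.inr i)) t), P.IsPath ∧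
      ∀ x, x ∈ P.support ↔ x = Sum.inr (Sum.inr i) ∨ i = i₀ ∧ ∀ k, x ≠ Sum.inr (Sum.inr k) := by
    intro i
    by_cases hi : i = i₀
    · let f : G →g extPathCover G ℓ :=
        ⟨Sum.inl, fun {x y} hxy => by simp [extPathCover, hxy, hxy.ne]⟩
      have hf : Function.Injective f := Sum.inl_injective
      have hfx : ∀ x, f x = Sum.inl x := fun _ => rfl
      have e1 : (extPathCover G ℓ).Adj (Sum.inr (Sum.inr i)) (Sum.inr (Sum.inl 2)) := by
        simp [extPathCover]
      have e2 : (extPathCover G ℓ).Adj (Sum.inr (Sum.inl 2)) (Sum.inr (Sum.inl 1)) := by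
        simp [extPathCover]
      have e3 : (extPathCover G ℓ).Adj (Sum.inr (Sum.inl 1)) (Sum.inr (Sum.inl 0)) := by
        simp [extPathCover]
      have e4 : (extPathCover G ℓ).Adj (Sum.inr (Sum.inl 0)) (f u) :=
        (SimpleGraph.fromRel_adj _ _ _).2 ⟨by simp, .inl (.inr (.inl ⟨u, rfl, rfl⟩))⟩
      refine ⟨_, .cons e1 (.cons e2 (.cons e3 (.cons e4 (p.map f)))), ?_, ?_⟩
      · have := hp.isPath.map hf
        simp [SimpleGraph.Walk.cons_isPath_iff, this, hfx]
      · rintro (x | x | x)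
        · simp [hfx, hi, hp.mem_support]
        · fin_cases x <;> simp [hi]
        · simp [hfx]
    · exact ⟨_, .nil, by simp, by simp [hi]⟩
  choose t P hP hS using key
  refine ⟨_, t, P, hP, ?_, ?_⟩
  · intro i j hij x hx hx'
    rw [hS] at hx hx'
    grind
  · rintro (x | x | x)
    · exact ⟨i₀, by simp [hS]⟩
    · exact ⟨i₀, by simp [hS]⟩
    · exact ⟨x, by simp [hS]⟩

/-- The vertices of `G'` can be covered by at most `ℓ` pairwise vertex-disjoint paths iff
`G` has a Hamiltonian path; moreover, in that case the path cover number of `G'` is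
exactly `ℓ`. -/
theorem statement7 {V : Type*} [Fintype V] [DecidableEq V] (G : SimpleGraph V)
    (hG : G.Connected) (ℓ : ℕ) (hℓ : 1 ≤ ℓ) :
    ((∃ m ≤ ℓ, HasPathCover (extPathCover G ℓ) m) ↔
        ∃ (u v : V) (p : G.Walk u v), p.IsHamiltonian) ∧
      ((∃ (u v : V) (p : G.Walk u v), p.IsHamiltonian) →
        pathCoverNumber (extPathCover G ℓ) = ℓ) := by
  have hne : Nonempty V := hG.nonempty
  refine ⟨⟨?_, ?_⟩, ?_⟩
  · rintro ⟨m, hm, s, t, P, hP, hdis, hcov⟩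
    obtain ⟨-, k, ha, hb, hV⟩ := cover_structure hm (fun i => (P i).support)
      (fun i => (P i).isChain_adj_support) (fun i => (hP i).support_nodup) hdis hcov
    exact hamiltonian_of_list (P k).isChain_adj_support (hP k).support_nodup ha hb hV
  · rintro ⟨u, v, p, hp⟩
    exact ⟨ℓ, le_rfl, cover_of_hamiltonian hℓ p hp⟩
  · rintro ⟨u, v, p, hp⟩
    have hmem : ℓ ∈ {m | HasPathCover (extPathCover G ℓ) m} := cover_of_hamiltonian hℓ p hp
    have hle := Nat.sInf_le hmem
    obtain ⟨s, t, P, hP, hdis, hcov⟩ := Nat.sInf_mem ⟨ℓ, hmem⟩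
    exact (cover_structure hle (fun i => (P i).support)
      (fun i => (P i).isChain_adj_support) (fun i => (hP i).support_nodup) hdis hcov).1
end
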